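/- arXiv:1807.09783 — 9 statements merged into one kernel-verified Lean document; each statement's English description precedes it below -/
import Mathlib

section
/- Let H_X and H_Z be l×n matrices over ℤ₂ with H_X·H_Zᵀ = 0, rank(H_X) = rank(H_Z) = l, such that every row and every column of H_X has at most t nonzero entries, and every row and every column of H_Z has at most t nonzero entries. Then there exists an n×n matrix δ over ℤ₂ with δ·δ = 0 such that the row space of δ equals the row space of H_X, the column space of δ equals the span of the rows of H_Z (viewed as column vectors), and every row and every column of δ has at most t² nonzero entries. -/
/-!
Take `δ = H_Zᵀ H_X`. Then `δ² = H_Zᵀ (H_X H_Zᵀ) H_X = 0`. Full rank of `H_Z` says that `v ↦ v H_Zᵀ`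
is surjective, so `v ↦ v δ` has the same image as `v ↦ v H_X`, which is the row space of `H_X`;
transposing exchanges the roles of `H_X` and `H_Z`. Row `i` of `δ` is a combination of rows of `H_X`
with coefficients taken from column `i` of `H_Z`, so its weight is at most the weight of that column
times the largest row weight of `H_X`.
-/

open Function Matrix

theorem mulVec_surjective_of_rank_eq_card {K m n : Type*} [Field K] [Fintype m] [Fintype n]
    {A : Matrix m n K} (hA : A.rank = Fintype.card m) : Surjective A.mulVec :=
  LinearMap.range_eq_top.mp <| Submodule.eq_top_of_finrank_eq <|
    hA.trans (Module.finrank_fintype_fun_eq_card K).symm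

theorem span_range_row_mul_eq_of_vecMul_surjective {R l m n : Type*} [Semiring R] [Fintype l]
    [Fintype m] {A : Matrix l m R} (hA : Surjective A.vecMul) (B : Matrix m n R) :
    Submodule.span R (Set.range (A * B).row) = Submodule.span R (Set.range B.row) := by
  have hcomp : (A * B).vecMulLinear = B.vecMulLinear ∘ₗ A.vecMulLinear :=
    LinearMap.ext fun v => (vecMul_vecMul v A B).symm
  rw [← range_vecMulLinear, hcomp,
    LinearMap.range_comp_of_range_eq_top _ (LinearMap.range_eq_top.mpr hA), range_vecMulLinear]

theorem hammingNorm_vecMul_le {R m n : Type*} [NonUnitalNonAssocSemiring R] [DecidableEq R]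
    [Fintype m] [Fintype n] (v : m → R) {B : Matrix m n R} {s : ℕ}
    (hB : ∀ k, hammingNorm (B.row k) ≤ s) : hammingNorm (v ᵥ* B) ≤ hammingNorm v * s := by
  classical
  have hsupport : ({j | (v ᵥ* B) j ≠ 0} : Finset n) ⊆
      ({k | v k ≠ 0} : Finset m).biUnion fun k => {j | B.row k j ≠ 0} := by
    intro j hj
    obtain ⟨k, -, hk⟩ := Finset.exists_ne_zero_of_sum_ne_zero (Finset.mem_filter_univ j |>.mp hj)
    simp only [Finset.mem_biUnion, Finset.mem_filter_univ]
    exact ⟨k, left_ne_zero_of_mul hk, right_ne_zero_of_mul hk⟩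
  exact (Finset.card_le_card hsupport).trans (Finset.card_biUnion_le_card_mul _ _ s fun k _ => hB k)

section TransposeMul

variable {R k m n : Type*} [CommSemiring R] [Fintype k]

theorem transpose_mul_mul_self_eq_zero [Fintype n] {A B : Matrix k n R} (h : A * Bᵀ = 0) :
    Bᵀ * A * (Bᵀ * A) = 0 := by
  rw [Matrix.mul_assoc, ← Matrix.mul_assoc A, h, Matrix.zero_mul, Matrix.mul_zero]

theorem col_transpose_mul (A : Matrix k n R) (B : Matrix k m R) : (Bᵀ * A).col = (Aᵀ * B).row := by
  rw [← row_transpose, transpose_mul, transpose_transpose]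

theorem span_range_row_transpose_mul [Fintype m] {B : Matrix k m R} (hB : Surjective B.mulVec)
    (A : Matrix k n R) :
    Submodule.span R (Set.range (Bᵀ * A).row) = Submodule.span R (Set.range A.row) := by
  refine span_range_row_mul_eq_of_vecMul_surjective (fun v => ?_) A
  simpa only [vecMul_transpose] using hB v

theorem hammingNorm_row_transpose_mul_le [DecidableEq R] [Fintype n] {A : Matrix k n R}
    {B : Matrix k m R} {r c : ℕ} (hA : ∀ i, hammingNorm (A.row i) ≤ r)
    (hB : ∀ j, hammingNorm (B.col j) ≤ c) (j : m) : hammingNorm ((Bᵀ * A).row j) ≤ c * r :=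
  calc hammingNorm ((Bᵀ * A).row j)
    _ = hammingNorm (B.col j ᵥ* A) := congrArg hammingNorm (mul_apply_eq_vecMul Bᵀ A j)
    _ ≤ hammingNorm (B.col j) * r := hammingNorm_vecMul_le _ hA
    _ ≤ c * r := Nat.mul_le_mul_right r (hB j)

end TransposeMul

theorem exists_sparse_boundary_operator_general {R k n : Type*} [CommSemiring R] [DecidableEq R]
    [Fintype k] [Fintype n] (HX HZ : Matrix k n R) {rX cX rZ cZ : ℕ} (hcomm : HX * HZᵀ = 0)
    (hX : Surjective HX.mulVec) (hZ : Surjective HZ.mulVec)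
    (hXrow : ∀ i, hammingNorm (HX.row i) ≤ rX) (hXcol : ∀ j, hammingNorm (HX.col j) ≤ cX)
    (hZrow : ∀ i, hammingNorm (HZ.row i) ≤ rZ) (hZcol : ∀ j, hammingNorm (HZ.col j) ≤ cZ) :
    ∃ δ : Matrix n n R, δ * δ = 0 ∧
      Submodule.span R (Set.range δ.row) = Submodule.span R (Set.range HX.row) ∧
      Submodule.span R (Set.range δ.col) = Submodule.span R (Set.range HZ.row) ∧
      (∀ i, hammingNorm (δ.row i) ≤ cZ * rX) ∧
      (∀ j, hammingNorm (δ.col j) ≤ cX * rZ) := by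
  refine ⟨HZᵀ * HX, transpose_mul_mul_self_eq_zero hcomm, span_range_row_transpose_mul hZ HX, ?_,
    hammingNorm_row_transpose_mul_le hXrow hZcol, ?_⟩
  all_goals rw [col_transpose_mul]
  · exact span_range_row_transpose_mul hX HZ
  · exact hammingNorm_row_transpose_mul_le hZrow hXcol

/-- Given full-rank CSS check matrices `H_X`, `H_Z` of sparsity
`t`, there is a single-sector boundary operator `δ` (with `δ·δ = 0`) whose rows
span the X-stabilizers, whose columns span the Z-stabilizers, and whose rows and
columns each have at most `t²` nonzero entries. -/
theorem exists_sparse_boundary_operator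
    {l n : ℕ} (HX HZ : Matrix (Fin l) (Fin n) (ZMod 2)) (t : ℕ)
    (hcomm : HX * HZ.transpose = 0)
    (hrX : HX.rank = l) (hrZ : HZ.rank = l)
    (hXrow : ∀ i : Fin l, (Finset.univ.filter fun j : Fin n => HX i j ≠ 0).card ≤ t)
    (hXcol : ∀ j : Fin n, (Finset.univ.filter fun i : Fin l => HX i j ≠ 0).card ≤ t)
    (hZrow : ∀ i : Fin l, (Finset.univ.filter fun j : Fin n => HZ i j ≠ 0).card ≤ t)
    (hZcol : ∀ j : Fin n, (Finset.univ.filter fun i : Fin l => HZ i j ≠ 0).card ≤ t) :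
    ∃ δ : Matrix (Fin n) (Fin n) (ZMod 2), δ * δ = 0 ∧
      Submodule.span (ZMod 2) (Set.range δ) = Submodule.span (ZMod 2) (Set.range HX) ∧
      Submodule.span (ZMod 2) (Set.range δ.transpose)
        = Submodule.span (ZMod 2) (Set.range HZ) ∧
      (∀ i : Fin n, (Finset.univ.filter fun j : Fin n => δ i j ≠ 0).card ≤ t ^ 2) ∧
      (∀ j : Fin n, (Finset.univ.filter fun i : Fin n => δ i j ≠ 0).card ≤ t ^ 2) := by
  rw [sq]
  exact exists_sparse_boundary_operator_general HX HZ hcomm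
    (mulVec_surjective_of_rank_eq_card (by rwa [Fintype.card_fin]))
    (mulVec_surjective_of_rank_eq_card (by rwa [Fintype.card_fin])) hXrow hXcol hZrow hZcol
end

section
/- Let δ₁ be an n₁×n₁ matrix and δ₂ an n₂×n₂ matrix over ℤ₂ with δ₁·δ₁ = 0 and δ₂·δ₂ = 0, and let ∂ = δ₁ ⊗ 1 + 1 ⊗ δ₂ be the homological product boundary operator. Then the kernel of the linear map w ↦ ∂·w on vectors indexed by Fin n₁ × Fin n₂ equals the sum of (i) the span of all pure tensors of kernel vectors, i.e., the span of {w : ∃ u, v with δ₁·u = 0, δ₂·v = 0, and w(i,j) = u(i)·v(j) for all (i,j)}, and (ii) the image of the linear map w ↦ ∂·w. In symbols: ker ∂ = ker δ₁ ⊗ ker δ₂ + im ∂. -/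
/-!
Over a field, choose `S` and `T` with `δ₁ S δ₁ = δ₁` and `δ₂ T δ₂ = δ₂`. Then
`P = 1 - (δ₁ S + S δ₁)` is homotopic to the identity and annihilated by `δ₁` on both sides, and
likewise `Q = 1 - (δ₂ T + T δ₂)`. In characteristic two, `H = S ⊗ 1 + P ⊗ T` satisfies
`∂ H + H ∂ = 1 - P ⊗ Q`, so each `w ∈ ker ∂` equals `(P ⊗ Q) w + ∂ (H w)`, and the columns of
`P ⊗ Q` are pure tensors of kernel vectors.
-/

namespace HomologicalProduct

open Matrix
open scoped Kronecker

section GeneralizedInverse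

variable {K : Type*}

theorem exists_comp_comp_eq_self [DivisionRing K] {V W : Type*} [AddCommGroup V] [Module K V]
    [AddCommGroup W] [Module K W] (f : V →ₗ[K] W) : ∃ s : W →ₗ[K] V, f ∘ₗ s ∘ₗ f = f := by
  obtain ⟨r, hr⟩ := f.rangeRestrict.exists_rightInverse_of_surjective f.range_rangeRestrict
  obtain ⟨s, hs⟩ := r.exists_extend
  refine ⟨s, LinearMap.ext fun x => ?_⟩
  have hsr : s (f x) = r (f.rangeRestrict x) := LinearMap.congr_fun hs (f.rangeRestrict x)
  have hfr : f.rangeRestrict (r (f.rangeRestrict x)) = f.rangeRestrict x :=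
    LinearMap.congr_fun hr (f.rangeRestrict x)
  calc f (s (f x)) = f (r (f.rangeRestrict x)) := by rw [hsr]
    _ = f x := congrArg Subtype.val hfr

theorem exists_mul_mul_eq_self [Field K] {m n : Type*} [Fintype m] [Fintype n]
    (A : Matrix m n K) : ∃ S : Matrix n m K, A * S * A = A := by
  classical
  obtain ⟨s, hs⟩ := exists_comp_comp_eq_self (toLin' A)
  refine ⟨LinearMap.toMatrix' s, toLin'.injective ?_⟩
  rw [toLin'_mul, toLin'_mul, toLin'_toMatrix', LinearMap.comp_assoc, hs]

end GeneralizedInverse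

section HomotopyDefect

variable {R : Type*} [Ring R] {a s : R}

/-- The endomorphism `1 - (a s + s a)` of a complex with differential `a`: it is homotopic to the
identity via `s`, and vanishes exactly when `s` is a contracting homotopy. -/
def homotopyDefect (a s : R) : R := 1 - (a * s + s * a)

theorem mul_homotopyDefect (ha : a * a = 0) (hs : a * s * a = a) :
    a * homotopyDefect a s = 0 := by
  simp only [homotopyDefect, mul_sub, mul_add, mul_one, ← mul_assoc, ha, hs, zero_mul, zero_add,
    sub_self]

theorem homotopyDefect_mul (ha : a * a = 0) (hs : a * s * a = a) :
    homotopyDefect a s * a = 0 := by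
  simp only [homotopyDefect, sub_mul, add_mul, one_mul, hs, mul_assoc s, ha, mul_zero, add_zero,
    sub_self]

end HomotopyDefect

variable {R m n : Type*} [CommRing R]

section PureTensors

variable [Fintype m] [Fintype n]

theorem kronecker_mulVec_mul {k l : Type*} (A : Matrix k m R) (B : Matrix l n R) (u : m → R)
    (v : n → R) :
    (A ⊗ₖ B) *ᵥ (fun p => u p.1 * v p.2) = fun p => (A *ᵥ u) p.1 * (B *ᵥ v) p.2 := by
  ext p
  simp only [mulVec, dotProduct, kroneckerMap_apply, Fintype.sum_prod_type,
    Finset.sum_mul_sum, mul_mul_mul_comm]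

/-- `ker A ⊗ ker B`, realised inside the vectors indexed by pairs as the span of the pure tensors
of kernel vectors. -/
def kerTensorKer (A : Matrix m m R) (B : Matrix n n R) : Submodule R (m × n → R) :=
  Submodule.span R {w | ∃ u : m → R, ∃ v : n → R,
    A *ᵥ u = 0 ∧ B *ᵥ v = 0 ∧ ∀ p : m × n, w p = u p.1 * v p.2}

theorem range_kronecker_le_kerTensorKer {A P : Matrix m m R} {B Q : Matrix n n R}
    (hP : A * P = 0) (hQ : B * Q = 0) :
    LinearMap.range (P ⊗ₖ Q).mulVecLin ≤ kerTensorKer A B := by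
  rw [range_mulVecLin, Submodule.span_le]
  rintro _ ⟨⟨i, j⟩, rfl⟩
  exact Submodule.subset_span ⟨P.col i, Q.col j, funext fun k => congrFun₂ hP k i,
    funext fun k => congrFun₂ hQ k j, fun _ => rfl⟩

end PureTensors

section KroneckerSum

variable [DecidableEq m] [DecidableEq n]

/-- The Kronecker sum `A ⊗ 1 + 1 ⊗ B`: the homological product boundary operator of two
single-sector boundary operators `A` and `B`. -/
def kroneckerSum (A : Matrix m m R) (B : Matrix n n R) : Matrix (m × n) (m × n) R :=
  A ⊗ₖ 1 + 1 ⊗ₖ B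

theorem kroneckerSum_apply (A : Matrix m m R) (B : Matrix n n R) (p q : m × n) :
    kroneckerSum A B p q =
      A p.1 q.1 * (if p.2 = q.2 then 1 else 0) + (if p.1 = q.1 then 1 else 0) * B p.2 q.2 := by
  simp only [kroneckerSum, Matrix.add_apply, kroneckerMap_apply, one_apply]

variable [Fintype m] [Fintype n]

theorem kroneckerSum_mulVec_mul (A : Matrix m m R) (B : Matrix n n R) (u : m → R) (v : n → R) :
    kroneckerSum A B *ᵥ (fun p => u p.1 * v p.2) =
      fun p => (A *ᵥ u) p.1 * v p.2 + u p.1 * (B *ᵥ v) p.2 := by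
  rw [kroneckerSum, add_mulVec, kronecker_mulVec_mul, kronecker_mulVec_mul, one_mulVec,
    one_mulVec]
  rfl

theorem kerTensorKer_le_ker_kroneckerSum (A : Matrix m m R) (B : Matrix n n R) :
    kerTensorKer A B ≤ LinearMap.ker (kroneckerSum A B).mulVecLin := by
  refine Submodule.span_le.mpr ?_
  rintro w ⟨u, v, hu, hv, hw⟩
  obtain rfl : w = fun p => u p.1 * v p.2 := funext hw
  refine LinearMap.mem_ker.mpr (funext fun p => ?_)
  simp only [mulVecLin_apply, kroneckerSum_mulVec_mul, hu, hv, Pi.zero_apply, zero_mul, mul_zero,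
    add_zero]

section CharTwo

variable [CharP R 2] {A S : Matrix m m R} {B T : Matrix n n R}

theorem kroneckerSum_mul_self (hA : A * A = 0) (hB : B * B = 0) :
    kroneckerSum A B * kroneckerSum A B = 0 := by
  have cross_terms : A ⊗ₖ B + A ⊗ₖ B = 0 := ext fun _ _ => CharTwo.add_self_eq_zero _
  simpa only [kroneckerSum, mul_add, add_mul, ← mul_kronecker_mul, hA, hB, mul_one, one_mul,
    zero_kronecker, kronecker_zero, zero_add, add_zero] using cross_terms

theorem kroneckerSum_homotopy (hA : A * A = 0) (hS : A * S * A = A) :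
    kroneckerSum A B * (S ⊗ₖ 1 + homotopyDefect A S ⊗ₖ T) +
        (S ⊗ₖ 1 + homotopyDefect A S ⊗ₖ T) * kroneckerSum A B =
      1 - homotopyDefect A S ⊗ₖ homotopyDefect B T := by
  set P := homotopyDefect A S with hP
  have cross_terms : S ⊗ₖ B + S ⊗ₖ B = 0 := ext fun _ _ => CharTwo.add_self_eq_zero _
  have left_defect : A * S + S * A = 1 - P := by rw [hP, homotopyDefect, sub_sub_cancel]
  have right_defect : B * T + T * B = 1 - homotopyDefect B T := by
    rw [homotopyDefect, sub_sub_cancel]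
  calc
    _ = (A * S + S * A) ⊗ₖ 1 + P ⊗ₖ (B * T + T * B) + (S ⊗ₖ B + S ⊗ₖ B) := by
      simp only [kroneckerSum, mul_add, add_mul, ← mul_kronecker_mul, mul_one, one_mul, hP,
        mul_homotopyDefect hA hS, homotopyDefect_mul hA hS, zero_kronecker, add_kronecker,
        kronecker_add]
      abel
    _ = (1 - P) ⊗ₖ 1 + P ⊗ₖ (1 - homotopyDefect B T) := by
      rw [cross_terms, add_zero, left_defect, right_defect]
    _ = 1 - P ⊗ₖ homotopyDefect B T := by
      ext p q
      simp only [← one_kronecker_one, Matrix.add_apply, Matrix.sub_apply, kroneckerMap_apply]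
      ring

theorem ker_kroneckerSum (hA : A * A = 0) (hB : B * B = 0) (hS : A * S * A = A)
    (hT : B * T * B = B) :
    LinearMap.ker (kroneckerSum A B).mulVecLin =
      kerTensorKer A B ⊔ LinearMap.range (kroneckerSum A B).mulVecLin := by
  refine le_antisymm (fun w hw => ?_) (sup_le (kerTensorKer_le_ker_kroneckerSum A B) ?_)
  · have hw₀ : kroneckerSum A B *ᵥ w = 0 := hw
    obtain ⟨H, hH⟩ : ∃ H, kroneckerSum A B * H + H * kroneckerSum A B =
        1 - homotopyDefect A S ⊗ₖ homotopyDefect B T := ⟨_, kroneckerSum_homotopy hA hS⟩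
    have boundary : kroneckerSum A B *ᵥ (H *ᵥ w) =
        w - (homotopyDefect A S ⊗ₖ homotopyDefect B T) *ᵥ w := by
      simpa only [add_mulVec, sub_mulVec, one_mulVec, ← mulVec_mulVec, hw₀, mulVec_zero, add_zero]
        using congrArg (· *ᵥ w) hH
    rw [← add_sub_cancel ((homotopyDefect A S ⊗ₖ homotopyDefect B T) *ᵥ w) w, ← boundary]
    exact Submodule.add_mem_sup
      (range_kronecker_le_kerTensorKer (mul_homotopyDefect hA hS) (mul_homotopyDefect hB hT)
        (LinearMap.mem_range_self _ w))
      (LinearMap.mem_range_self _ _)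
  · rw [LinearMap.range_le_ker_iff, ← mulVecLin_mul, kroneckerSum_mul_self hA hB, mulVecLin_zero]

end CharTwo

end KroneckerSum

end HomologicalProduct

open HomologicalProduct in
theorem homological_product_kernel_general {K m n : Type*} [Field K] [CharP K 2]
    [Fintype m] [DecidableEq m] [Fintype n] [DecidableEq n]
    {A : Matrix m m K} {B : Matrix n n K} (hA : A * A = 0) (hB : B * B = 0) :
    LinearMap.ker (kroneckerSum A B).mulVecLin =
      kerTensorKer A B ⊔ LinearMap.range (kroneckerSum A B).mulVecLin := by
  obtain ⟨S, hS⟩ := exists_mul_mul_eq_self A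
  obtain ⟨T, hT⟩ := exists_mul_mul_eq_self B
  exact ker_kroneckerSum hA hB hS hT

/-- `ker ∂ = ker δ₁ ⊗ ker δ₂ + im ∂` for the homological
product boundary operator `∂ = δ₁ ⊗ 1 + 1 ⊗ δ₂`: the kernel of `∂` is the span
of pure tensors of kernel vectors together with the image of `∂`. -/
theorem homological_product_kernel
    {n₁ n₂ : ℕ} (δ₁ : Matrix (Fin n₁) (Fin n₁) (ZMod 2))
    (δ₂ : Matrix (Fin n₂) (Fin n₂) (ZMod 2))
    (h₁ : δ₁ * δ₁ = 0) (h₂ : δ₂ * δ₂ = 0)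
    (bd : Matrix (Fin n₁ × Fin n₂) (Fin n₁ × Fin n₂) (ZMod 2))
    (hbd : ∀ p q : Fin n₁ × Fin n₂,
      bd p q = δ₁ p.1 q.1 * (if p.2 = q.2 then 1 else 0)
        + (if p.1 = q.1 then 1 else 0) * δ₂ p.2 q.2) :
    LinearMap.ker bd.mulVecLin =
      Submodule.span (ZMod 2) {w : Fin n₁ × Fin n₂ → ZMod 2 |
        ∃ u : Fin n₁ → ZMod 2, ∃ v : Fin n₂ → ZMod 2,
          δ₁.mulVec u = 0 ∧ δ₂.mulVec v = 0 ∧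
          ∀ p : Fin n₁ × Fin n₂, w p = u p.1 * v p.2}
      ⊔ LinearMap.range bd.mulVecLin := by
  obtain rfl : bd = HomologicalProduct.kroneckerSum δ₁ δ₂ := Matrix.ext fun p q =>
    (hbd p q).trans (HomologicalProduct.kroneckerSum_apply δ₁ δ₂ p q).symm
  exact homological_product_kernel_general h₁ h₂
end

section
/- Let δ₁ be an n₁×n₁ matrix and δ₂ an n₂×n₂ matrix over ℤ₂ with δ₁·δ₁ = 0 and δ₂·δ₂ = 0, and let ∂ = δ₁ ⊗ 1 + 1 ⊗ δ₂ be the homological product boundary operator. Then the number of logical qubits multiplies: as integers, n₁·n₂ − 2·rank(∂) = (n₁ − 2·rank(δ₁))·(n₂ − 2·rank(δ₂)). -/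
/-!
Let `D₁` and `D₂` be square-zero endomorphisms of vector spaces `V` and `W`. There is a homotopy
`H₁` such that `P₁ = 1 - D₁H₁ - H₁D₁` is an idempotent whose range represents the homology of
`D₁`. As `D₂² = 0`, the endomorphism `1 - H₁ ⊗ D₂` is unipotent, and multiplying the homological
product by it on both sides gives
`(1 - H₁ ⊗ D₂) (D₁ ⊗ 1 + 1 ⊗ D₂) (1 - H₁ ⊗ D₂) = D₁ ⊗ 1 + P₁ ⊗ D₂`.
The ranges of the two summands on the right are independent, so
`rank ∂ = rank D₁ · dim W + rank P₁ · rank D₂`, where `rank P₁ = dim V - 2 rank D₁`. No signs enter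
the computation, so it is valid in every characteristic.
-/

open Module TensorProduct
open scoped Kronecker

/-- `H` is a homotopy between the identity and an idempotent `P` annihilated by the square-zero
element `D` on both sides. For endomorphisms, the range of `P` then represents the homology of
`D`. -/
structure IsHomologyContraction {R : Type*} [Ring R] (D H P : R) : Prop where
  sq_zero : D * D = 0
  mul_proj : D * P = 0
  proj_mul : P * D = 0
  proj_idem : P * P = P
  homotopy : D * H + H * D + P = 1

section Ring

variable {R : Type*} [Ring R] {D H P : R}

namespace IsHomologyContraction

theorem of_mul_mul_self (hD : D * D = 0) (hH : D * H * D = D) (hHH : D * H * (H * D) = 0) :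
    IsHomologyContraction D H (1 - (D * H + H * D)) := by
  have hDHD : D * (H * D) = D := by rw [← mul_assoc, hH]
  have hDP : D * (1 - (D * H + H * D)) = 0 := by
    rw [mul_sub, mul_add, ← mul_assoc D D, hD, hDHD, mul_one, zero_mul, zero_add, sub_self]
  have hPD : (1 - (D * H + H * D)) * D = 0 := by
    rw [sub_mul, add_mul, hH, mul_assoc H, hD, one_mul, mul_zero, add_zero, sub_self]
  have hPHD : (1 - (D * H + H * D)) * (H * D) = 0 := by
    rw [sub_mul, add_mul, hHH, mul_assoc H, hDHD, one_mul, zero_add, sub_self]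
  refine ⟨hD, hDP, hPD, ?_, add_sub_cancel _ _⟩
  rw [mul_sub, mul_add, ← mul_assoc _ D, hPD, hPHD, zero_mul, add_zero, sub_zero, mul_one]

theorem exists_of_mul_mul_self {G : R} (hD : D * D = 0) (hG : D * G * D = D) :
    ∃ H P : R, IsHomologyContraction D H P := by
  -- Subtracting `G * G * D` from `G` forces `D * H * H * D = 0`, which makes `P` idempotent.
  have hHD : (G - G * G * D) * D = G * D := by
    rw [sub_mul, mul_assoc (G * G), hD, mul_zero, sub_zero]
  refine ⟨G - G * G * D, _, of_mul_mul_self hD ?_ ?_⟩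
  · rw [mul_assoc, hHD, ← mul_assoc, hG]
  · calc D * (G - G * G * D) * ((G - G * G * D) * D)
        = D * G * G * D - D * G * G * (D * G * D) := by rw [hHD]; noncomm_ring
      _ = 0 := by rw [hG, sub_self]

end IsHomologyContraction

theorem one_sub_mul_add_mul_one_sub_of_homotopy {B : R} (hP : D * H + H * D + P = 1)
    (hDB : Commute D B) (hHB : Commute H B) (hB : B * B = 0) :
    (1 - H * B) * (D + B) * (1 - H * B) = D + P * B := by
  have hBHB : B * (H * B) = 0 := by rw [← mul_assoc, ← hHB.eq, mul_assoc, hB, mul_zero]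
  have hHBB : H * B * B = 0 := by rw [mul_assoc, hB, mul_zero]
  have hHBD : H * B * D = H * D * B := by rw [mul_assoc, ← hDB.eq, mul_assoc]
  calc (1 - H * B) * (D + B) * (1 - H * B)
      = D + B - H * B * D - D * H * B - H * B * B - B * (H * B) + H * B * D * (H * B)
          + H * B * B * (H * B) := by noncomm_ring
    _ = D + (1 - (D * H + H * D)) * B := by
      rw [hBHB, hHBB, hHBD, zero_mul, mul_assoc (H * D) B, hBHB]; noncomm_ring
    _ = D + P * B := by rw [← hP, add_sub_cancel_left]

end Ring

section Module

variable {R U V W X : Type*} [Ring R] [AddCommGroup U] [Module R U] [AddCommGroup V] [Module R V]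
  [AddCommGroup W] [Module R W] [AddCommGroup X] [Module R X]

theorem finrank_range_comp_comp (f : V →ₗ[R] W) {e : W →ₗ[R] X} {s : U →ₗ[R] V}
    (he : Function.Injective e) (hs : Function.Surjective s) :
    finrank R (LinearMap.range (e ∘ₗ f ∘ₗ s)) = finrank R (LinearMap.range f) := by
  rw [LinearMap.range_comp, LinearMap.range_comp_of_range_eq_top _ (LinearMap.range_eq_top.2 hs)]
  exact (Submodule.equivMapOfInjective e he _).finrank_eq.symm

theorem range_add_eq_sup_of_comp_eq {f g : V →ₗ[R] W} {p : V →ₗ[R] V}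
    (hf : f ∘ₗ p = 0) (hg : g ∘ₗ p = g) :
    LinearMap.range (f + g) = LinearMap.range f ⊔ LinearMap.range g := by
  have hf' : (f + g) ∘ₗ (LinearMap.id - p) = f := by
    rw [LinearMap.comp_sub, LinearMap.comp_id, LinearMap.add_comp, hf, hg, zero_add,
      add_sub_cancel_right]
  have hg' : (f + g) ∘ₗ p = g := by rw [LinearMap.add_comp, hf, hg, zero_add]
  refine le_antisymm (LinearMap.range_add_le f g) (sup_le ?_ ?_)
  · exact (congrArg LinearMap.range hf').ge.trans (LinearMap.range_comp_le_range _ _)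
  · exact (congrArg LinearMap.range hg').ge.trans (LinearMap.range_comp_le_range _ _)

theorem disjoint_range_of_comp_eq {f : U →ₗ[R] W} {g : V →ₗ[R] W} {q : W →ₗ[R] W}
    (hf : q ∘ₗ f = 0) (hg : q ∘ₗ g = g) :
    Disjoint (LinearMap.range f) (LinearMap.range g) := by
  rw [Submodule.disjoint_def]
  rintro _ ⟨x, rfl⟩ ⟨y, hy⟩
  calc f x = q (g y) := by rw [← hy]; exact congr($hg y).symm
    _ = 0 := by rw [hy]; exact congr($hf x)

theorem IsHomologyContraction.ker_eq {D H P : End R V} (h : IsHomologyContraction D H P) :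
    LinearMap.ker D = LinearMap.range D ⊔ LinearMap.range P := by
  refine le_antisymm (fun x hx ↦ ?_) (sup_le ?_ ?_)
  · have hx' : D (H x) + P x = x := by
      simpa [LinearMap.mem_ker.1 hx] using congr($h.homotopy x)
    exact Submodule.mem_sup.2 ⟨D (H x), ⟨_, rfl⟩, P x, ⟨_, rfl⟩, hx'⟩
  · exact LinearMap.range_le_ker_iff.2 h.sq_zero
  · exact LinearMap.range_le_ker_iff.2 h.mul_proj

end Module

section HomologicalProduct

variable {R V W : Type*} [CommRing R] [AddCommGroup V] [Module R V] [AddCommGroup W] [Module R W]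

/-- The boundary operator `∂ = f ⊗ 1 + 1 ⊗ g` of the homological product, in basis-free form. It
carries no signs: for square-zero `f` and `g` one has `∂² = 2 (f ⊗ g)`, which vanishes in
characteristic two. -/
def homologicalProduct (f : End R V) (g : End R W) : End R (V ⊗[R] W) :=
  f.rTensor W + g.lTensor V

theorem one_sub_map_mul_homologicalProduct_mul_one_sub_map {D H P : End R V} {g : End R W}
    (hP : D * H + H * D + P = 1) (hg : g * g = 0) :
    (1 - TensorProduct.map H g) * homologicalProduct D g * (1 - TensorProduct.map H g) =
      D.rTensor W + TensorProduct.map P g := by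
  have hmap (f : End R V) : TensorProduct.map f g = f.rTensor W * g.lTensor V :=
    (LinearMap.rTensor_comp_lTensor _ f g).symm
  have hcomm (f : End R V) : Commute (f.rTensor W) (g.lTensor V) :=
    (hmap f).symm.trans (LinearMap.lTensor_comp_rTensor _ f g).symm
  have hgg : g.lTensor V * g.lTensor V = 0 := by
    rw [← LinearMap.lTensor_mul, hg, LinearMap.lTensor_zero]
  have hPW : D.rTensor W * H.rTensor W + H.rTensor W * D.rTensor W + P.rTensor W = 1 := by
    rw [← LinearMap.rTensor_mul, ← LinearMap.rTensor_mul, ← LinearMap.rTensor_add,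
      ← LinearMap.rTensor_add, hP]
    exact LinearMap.rTensor_id W V
  rw [hmap, hmap, homologicalProduct,
    one_sub_mul_add_mul_one_sub_of_homotopy hPW (hcomm D) (hcomm H) hgg]

theorem toLin_kronecker_one_add_one_kronecker {m n : Type*} [Fintype m] [Fintype n]
    [DecidableEq m] [DecidableEq n] (b : Basis m R V) (c : Basis n R W) (A : Matrix m m R)
    (B : Matrix n n R) :
    Matrix.toLin (b.tensorProduct c) (b.tensorProduct c) (A ⊗ₖ 1 + 1 ⊗ₖ B) =
      homologicalProduct (Matrix.toLin b b A) (Matrix.toLin c c B) := by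
  rw [map_add, Matrix.toLin_kronecker, Matrix.toLin_kronecker, Matrix.toLin_one, Matrix.toLin_one]
  rfl

end HomologicalProduct

section Field

variable {K U V W X : Type*} [Field K] [AddCommGroup U] [Module K U] [AddCommGroup V] [Module K V]
  [AddCommGroup W] [Module K W] [AddCommGroup X] [Module K X]

theorem exists_comp_comp_self_eq (f : V →ₗ[K] W) : ∃ g : W →ₗ[K] V, f ∘ₗ g ∘ₗ f = f := by
  obtain ⟨s, hs⟩ := f.rangeRestrict.exists_rightInverse_of_surjective f.range_rangeRestrict
  obtain ⟨g, hg⟩ := s.exists_extend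
  refine ⟨g, ?_⟩
  calc f ∘ₗ g ∘ₗ f
      = (LinearMap.range f).subtype ∘ₗ (f.rangeRestrict ∘ₗ (g ∘ₗ (LinearMap.range f).subtype)) ∘ₗ
          f.rangeRestrict := rfl
    _ = f := by rw [hg, hs]; rfl

theorem finrank_sup_of_disjoint {S T : Submodule K V} [FiniteDimensional K S]
    [FiniteDimensional K T] (h : Disjoint S T) :
    finrank K ↥(S ⊔ T) = finrank K S + finrank K T := by
  rw [← Submodule.finrank_sup_add_finrank_inf_eq, h.eq_bot, finrank_bot, add_zero]

theorem finrank_range_tensorProduct_map (f : U →ₗ[K] V) (g : W →ₗ[K] X) :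
    finrank K (LinearMap.range (TensorProduct.map f g)) =
      finrank K (LinearMap.range f) * finrank K (LinearMap.range g) := by
  have hinj : Function.Injective (mapIncl (LinearMap.range f) (LinearMap.range g)) :=
    map_injective_of_flat_flat _ _ (Submodule.subtype_injective _) (Submodule.subtype_injective _)
  rw [range_map, ← range_mapIncl, LinearMap.finrank_range_of_inj hinj, finrank_tensorProduct]

theorem IsHomologyContraction.finrank_eq [FiniteDimensional K V] {D H P : End K V}
    (h : IsHomologyContraction D H P) :
    finrank K V = 2 * finrank K (LinearMap.range D) + finrank K (LinearMap.range P) := by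
  have hker : finrank K (LinearMap.ker D) =
      finrank K (LinearMap.range D) + finrank K (LinearMap.range P) := by
    rw [h.ker_eq, finrank_sup_of_disjoint (disjoint_range_of_comp_eq h.proj_mul h.proj_idem)]
  have hrank := D.finrank_range_add_finrank_ker
  lia

theorem IsHomologyContraction.finrank_range_rTensor_add_map [FiniteDimensional K V]
    [FiniteDimensional K W] {D H P : End K V} (h : IsHomologyContraction D H P) (g : End K W) :
    finrank K (LinearMap.range (D.rTensor W + TensorProduct.map P g)) =
      finrank K (LinearMap.range D) * finrank K W +
        finrank K (LinearMap.range P) * finrank K (LinearMap.range g) := by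
  have hDP : D.rTensor W ∘ₗ P.rTensor W = 0 := by
    rw [← LinearMap.rTensor_comp, ← Module.End.mul_eq_comp, h.mul_proj, LinearMap.rTensor_zero]
  have hPD : P.rTensor W ∘ₗ D.rTensor W = 0 := by
    rw [← LinearMap.rTensor_comp, ← Module.End.mul_eq_comp, h.proj_mul, LinearMap.rTensor_zero]
  have hgP : TensorProduct.map P g ∘ₗ P.rTensor W = TensorProduct.map P g := by
    rw [LinearMap.map_comp_rTensor, ← Module.End.mul_eq_comp, h.proj_idem]
  have hPg : P.rTensor W ∘ₗ TensorProduct.map P g = TensorProduct.map P g := by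
    rw [LinearMap.rTensor_comp_map, ← Module.End.mul_eq_comp, h.proj_idem]
  rw [range_add_eq_sup_of_comp_eq hDP hgP,
    finrank_sup_of_disjoint (disjoint_range_of_comp_eq hPD hPg), LinearMap.rTensor,
    finrank_range_tensorProduct_map, finrank_range_tensorProduct_map, LinearMap.range_id,
    finrank_top]

theorem IsHomologyContraction.finrank_range_homologicalProduct [FiniteDimensional K V]
    [FiniteDimensional K W] {D H P : End K V} (h : IsHomologyContraction D H P) {g : End K W}
    (hg : g * g = 0) :
    finrank K (LinearMap.range (homologicalProduct D g)) =
      finrank K (LinearMap.range D) * finrank K W +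
        finrank K (LinearMap.range P) * finrank K (LinearMap.range g) := by
  have hnil : IsNilpotent (TensorProduct.map H g) :=
    ⟨2, by rw [sq, ← TensorProduct.map_mul, hg, map_zero_right]⟩
  obtain ⟨hinj, hsurj⟩ := (Module.End.isUnit_iff _).1 hnil.isUnit_one_sub
  rw [← finrank_range_comp_comp _ hinj hsurj, ← h.finrank_range_rTensor_add_map,
    ← one_sub_map_mul_homologicalProduct_mul_one_sub_map h.homotopy hg, mul_assoc]
  rfl

theorem finrank_sub_two_mul_finrank_range_homologicalProduct [FiniteDimensional K V]
    [FiniteDimensional K W] {f : End K V} {g : End K W} (hf : f * f = 0) (hg : g * g = 0) :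
    (finrank K (V ⊗[K] W) : ℤ) - 2 * finrank K (LinearMap.range (homologicalProduct f g)) =
      (finrank K V - 2 * finrank K (LinearMap.range f)) *
        (finrank K W - 2 * finrank K (LinearMap.range g)) := by
  obtain ⟨G, hG⟩ := exists_comp_comp_self_eq f
  obtain ⟨H, P, h⟩ := IsHomologyContraction.exists_of_mul_mul_self hf hG
  rw [h.finrank_range_homologicalProduct hg, finrank_tensorProduct, h.finrank_eq]
  push_cast
  ring

end Field

theorem homological_product_logical_qubits_general {K m n : Type*} [Field K] [Fintype m]
    [Fintype n] [DecidableEq m] [DecidableEq n] {δ₁ : Matrix m m K} {δ₂ : Matrix n n K}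
    (h₁ : δ₁ * δ₁ = 0) (h₂ : δ₂ * δ₂ = 0) :
    (Fintype.card m * Fintype.card n : ℤ) -
        2 * (δ₁ ⊗ₖ (1 : Matrix n n K) + (1 : Matrix m m K) ⊗ₖ δ₂).rank =
      (Fintype.card m - 2 * δ₁.rank) * (Fintype.card n - 2 * δ₂.rank) := by
  let b := Pi.basisFun K m
  let c := Pi.basisFun K n
  have hb : Matrix.toLin b b δ₁ ∘ₗ Matrix.toLin b b δ₁ = 0 := by
    rw [← Matrix.toLin_mul, h₁, map_zero]
  have hc : Matrix.toLin c c δ₂ ∘ₗ Matrix.toLin c c δ₂ = 0 := by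
    rw [← Matrix.toLin_mul, h₂, map_zero]
  rw [Matrix.rank_eq_finrank_range_toLin _ (b.tensorProduct c) (b.tensorProduct c),
    toLin_kronecker_one_add_one_kronecker, δ₁.rank_eq_finrank_range_toLin b b,
    δ₂.rank_eq_finrank_range_toLin c c]
  simpa using finrank_sub_two_mul_finrank_range_homologicalProduct hb hc

/-- The number of logical qubits multiplies under the
homological product: `n₁n₂ - 2·rank(∂) = (n₁ - 2·rank(δ₁))·(n₂ - 2·rank(δ₂))`
as integers. -/
theorem homological_product_logical_qubits
    {n₁ n₂ : ℕ} (δ₁ : Matrix (Fin n₁) (Fin n₁) (ZMod 2))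
    (δ₂ : Matrix (Fin n₂) (Fin n₂) (ZMod 2))
    (h₁ : δ₁ * δ₁ = 0) (h₂ : δ₂ * δ₂ = 0)
    (bd : Matrix (Fin n₁ × Fin n₂) (Fin n₁ × Fin n₂) (ZMod 2))
    (hbd : ∀ p q : Fin n₁ × Fin n₂,
      bd p q = δ₁ p.1 q.1 * (if p.2 = q.2 then 1 else 0)
        + (if p.1 = q.1 then 1 else 0) * δ₂ p.2 q.2) :
    ((n₁ * n₂ : ℕ) : ℤ) - 2 * (bd.rank : ℤ)
      = ((n₁ : ℤ) - 2 * (δ₁.rank : ℤ)) * ((n₂ : ℤ) - 2 * (δ₂.rank : ℤ)) := by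
  obtain rfl : bd = δ₁ ⊗ₖ 1 + 1 ⊗ₖ δ₂ := Matrix.ext fun p q ↦ by simp [hbd, Matrix.one_apply]
  simpa using homological_product_logical_qubits_general h₁ h₂
end

section
/- Let δ₁ be an n₁×n₁ matrix and δ₂ an n₂×n₂ matrix over ℤ₂ such that every row and every column of δ₁ has at most w₁ nonzero entries and every row and every column of δ₂ has at most w₂ nonzero entries. Then every row and every column of the homological product boundary operator ∂ = δ₁ ⊗ 1 + 1 ⊗ δ₂ has at most w₁ + w₂ nonzero entries. -/
/-!
Row `(i, j)` of `A ⊗ 1 + 1 ⊗ B` is supported on a cross in `m × n`: a copy of row `i` of `A` in the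
line through `j`, and a copy of row `j` of `B` in the line through `i`. Columns reduce to rows
because transposition commutes with the Kronecker sum.
-/

open Function Matrix
open scoped Kronecker

/-- The largest number of nonzero entries in a row of `A`, equal to `⊤` if it is unbounded. -/
noncomputable def rowSparsity {R m n : Type*} [Zero R] (A : Matrix m n R) : ℕ∞ :=
  ⨆ i, (support (A i)).encard

/-- The sparsity of `A`: the largest number of nonzero entries in a row or column of `A`,
equal to `⊤` if it is unbounded. -/
noncomputable def sparsity {R m n : Type*} [Zero R] (A : Matrix m n R) : ℕ∞ :=
  max (rowSparsity A) (rowSparsity Aᵀ)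

/-- The Kronecker sum `A ⊗ 1 + 1 ⊗ B`, which is the boundary operator of the homological product
when `A` and `B` are boundary operators. -/
def kroneckerSum {R m n : Type*} [NonAssocSemiring R] [DecidableEq m] [DecidableEq n]
    (A : Matrix m m R) (B : Matrix n n R) : Matrix (m × n) (m × n) R :=
  A ⊗ₖ (1 : Matrix n n R) + (1 : Matrix m m R) ⊗ₖ B

section Sparsity

variable {R m n : Type*} [Zero R]

theorem encard_support_le_rowSparsity (A : Matrix m n R) (i : m) :
    (support (A i)).encard ≤ rowSparsity A :=
  le_iSup (fun i ↦ (support (A i)).encard) i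

theorem encard_support_eq_card_filter [Fintype n] [DecidableEq R] (f : n → R) :
    (support f).encard = (Finset.univ.filter fun j ↦ f j ≠ 0).card := by
  rw [← Set.encard_coe_eq_coe_finsetCard, Finset.coe_filter_univ, support]

theorem rowSparsity_le_natCast_iff [Fintype n] [DecidableEq R] {A : Matrix m n R} {w : ℕ} :
    rowSparsity A ≤ w ↔ ∀ i, (Finset.univ.filter fun j ↦ A i j ≠ 0).card ≤ w := by
  simp only [rowSparsity, iSup_le_iff, encard_support_eq_card_filter, Nat.cast_le]

theorem sparsity_le_natCast_iff [Fintype m] [Fintype n] [DecidableEq R] {A : Matrix m n R}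
    {w : ℕ} :
    sparsity A ≤ w ↔
      (∀ i, (Finset.univ.filter fun j ↦ A i j ≠ 0).card ≤ w) ∧
        ∀ j, (Finset.univ.filter fun i ↦ A i j ≠ 0).card ≤ w :=
  max_le_iff.trans (and_congr rowSparsity_le_natCast_iff rowSparsity_le_natCast_iff)

end Sparsity

section KroneckerSum

variable {R m n : Type*} [NonAssocSemiring R] [DecidableEq m] [DecidableEq n]
  (A : Matrix m m R) (B : Matrix n n R)

theorem kroneckerSum_apply (p q : m × n) :
    kroneckerSum A B p q =
      A p.1 q.1 * (if p.2 = q.2 then 1 else 0) + (if p.1 = q.1 then 1 else 0) * B p.2 q.2 := by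
  simp only [kroneckerSum, Matrix.add_apply, kroneckerMap_apply, one_apply]

theorem transpose_kroneckerSum : (kroneckerSum A B)ᵀ = kroneckerSum Aᵀ Bᵀ := by
  simp only [kroneckerSum, transpose_add, ← kroneckerMap_transpose, transpose_one]

theorem support_kroneckerSum_subset (p : m × n) :
    support (kroneckerSum A B p) ⊆
      (·, p.2) '' support (A p.1) ∪ (p.1, ·) '' support (B p.2) := by
  rintro ⟨i, j⟩ hne
  rw [mem_support, kroneckerSum_apply] at hne
  obtain hA | hB : A p.1 i * (if p.2 = j then 1 else 0) ≠ 0 ∨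
      (if p.1 = i then 1 else 0) * B p.2 j ≠ 0 := by
    contrapose! hne
    rw [hne.1, hne.2, add_zero]
  · obtain rfl : p.2 = j := by_contra fun h ↦ hA (by rw [if_neg h, mul_zero])
    exact .inl ⟨i, left_ne_zero_of_mul hA, rfl⟩
  · obtain rfl : p.1 = i := by_contra fun h ↦ hB (by rw [if_neg h, zero_mul])
    exact .inr ⟨j, right_ne_zero_of_mul hB, rfl⟩

theorem encard_support_kroneckerSum_le (p : m × n) :
    (support (kroneckerSum A B p)).encard ≤
      (support (A p.1)).encard + (support (B p.2)).encard :=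
  calc (support (kroneckerSum A B p)).encard
    _ ≤ ((·, p.2) '' support (A p.1) ∪ (p.1, ·) '' support (B p.2)).encard :=
      Set.encard_le_encard (support_kroneckerSum_subset A B p)
    _ ≤ ((·, p.2) '' support (A p.1)).encard + ((p.1, ·) '' support (B p.2)).encard :=
      Set.encard_union_le _ _
    _ ≤ (support (A p.1)).encard + (support (B p.2)).encard :=
      add_le_add (Set.encard_image_le _ _) (Set.encard_image_le _ _)

theorem rowSparsity_kroneckerSum_le :
    rowSparsity (kroneckerSum A B) ≤ rowSparsity A + rowSparsity B :=
  iSup_le fun p ↦ (encard_support_kroneckerSum_le A B p).trans <|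
    add_le_add (encard_support_le_rowSparsity A p.1) (encard_support_le_rowSparsity B p.2)

theorem homological_product_sparsity_general :
    sparsity (kroneckerSum A B) ≤ sparsity A + sparsity B := by
  refine max_le ?rows ?columns
  case rows =>
    exact (rowSparsity_kroneckerSum_le A B).trans (add_le_add (le_max_left _ _) (le_max_left _ _))
  case columns =>
    rw [transpose_kroneckerSum]
    exact (rowSparsity_kroneckerSum_le Aᵀ Bᵀ).trans
      (add_le_add (le_max_right _ _) (le_max_right _ _))

end KroneckerSum

/-- If every row and column of `δ₁` has at most `w₁` nonzero
entries and every row and column of `δ₂` has at most `w₂`, then every row and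
column of the homological product boundary operator `∂ = δ₁ ⊗ 1 + 1 ⊗ δ₂` has at
most `w₁ + w₂` nonzero entries. -/
theorem homological_product_sparsity
    {n₁ n₂ : ℕ} (δ₁ : Matrix (Fin n₁) (Fin n₁) (ZMod 2))
    (δ₂ : Matrix (Fin n₂) (Fin n₂) (ZMod 2)) (w₁ w₂ : ℕ)
    (h₁row : ∀ i : Fin n₁, (Finset.univ.filter fun j : Fin n₁ => δ₁ i j ≠ 0).card ≤ w₁)
    (h₁col : ∀ j : Fin n₁, (Finset.univ.filter fun i : Fin n₁ => δ₁ i j ≠ 0).card ≤ w₁)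
    (h₂row : ∀ i : Fin n₂, (Finset.univ.filter fun j : Fin n₂ => δ₂ i j ≠ 0).card ≤ w₂)
    (h₂col : ∀ j : Fin n₂, (Finset.univ.filter fun i : Fin n₂ => δ₂ i j ≠ 0).card ≤ w₂)
    (bd : Matrix (Fin n₁ × Fin n₂) (Fin n₁ × Fin n₂) (ZMod 2))
    (hbd : ∀ p q : Fin n₁ × Fin n₂,
      bd p q = δ₁ p.1 q.1 * (if p.2 = q.2 then 1 else 0)
        + (if p.1 = q.1 then 1 else 0) * δ₂ p.2 q.2) :
    (∀ p : Fin n₁ × Fin n₂,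
      (Finset.univ.filter fun q : Fin n₁ × Fin n₂ => bd p q ≠ 0).card ≤ w₁ + w₂) ∧
    (∀ q : Fin n₁ × Fin n₂,
      (Finset.univ.filter fun p : Fin n₁ × Fin n₂ => bd p q ≠ 0).card ≤ w₁ + w₂) := by
  obtain rfl : bd = kroneckerSum δ₁ δ₂ := by ext p q; rw [hbd, kroneckerSum_apply]
  exact sparsity_le_natCast_iff.mp <| (homological_product_sparsity_general δ₁ δ₂).trans <|
    add_le_add (sparsity_le_natCast_iff.mpr ⟨h₁row, h₁col⟩)
      (sparsity_le_natCast_iff.mpr ⟨h₂row, h₂col⟩)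
end

section
/- Let δ₁ be an n₁×n₁ matrix and δ₂ an n₂×n₂ matrix over ℤ₂ with δ₁·δ₁ = 0 and δ₂·δ₂ = 0, and let ∂ = δ₁ ⊗ 1 + 1 ⊗ δ₂. Suppose every Z-logical operator of δ₁ has Hamming weight at least d₁ and every Z-logical operator of δ₂ has Hamming weight at least d₂. Then every Z-logical operator of ∂ (every vector w with ∂·w = 0 that is not in the column space of ∂) has Hamming weight at least max(d₁, d₂). -/
/-!
Read a vector on the product index set as a matrix `X`. Then `∂ = A ⊗ 1 + 1 ⊗ B` acts by
`X ↦ B * X + X * Aᵀ`, so that, up to sign, the cycles are the chain maps `X` from `Aᵀ` to `B` and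
the boundaries are the null-homotopic ones. Over a field, a chain map that sends every cycle to a
boundary is null-homotopic. Hence, if `X` is a logical operator, some `X *ᵥ v` is a logical operator
of `B`, and it cannot have more nonzero entries than `X` has nonzero rows. The bound for `A` follows
by exchanging the factors.
-/

open Matrix
open scoped Kronecker

/-- Logical operators of the CSS code with check matrix `H` and stabilizer generators the columns
of `G`: the vectors that satisfy all the checks without being stabilizers. The code of a
single-sector boundary operator `δ` is the case `H = G = δ`. -/
def IsLogicalOperator {l m n R : Type*} [NonUnitalNonAssocSemiring R] [Fintype m] [Fintype n]
    (H : Matrix l n R) (G : Matrix n m R) (v : n → R) : Prop :=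
  H *ᵥ v = 0 ∧ v ∉ Set.range G.mulVec

section HammingNorm

theorem hammingNorm_comp_equiv {ι κ R : Type*} [Fintype ι] [Fintype κ] [DecidableEq R] [Zero R]
    (x : ι → R) (e : κ ≃ ι) : hammingNorm (x ∘ e) = hammingNorm x :=
  Finset.card_equiv e fun _ => by simp only [Finset.mem_filter_univ, Function.comp_apply]

theorem hammingNorm_mulVec_le_hammingNorm_vec {m n R : Type*} [Fintype m] [Fintype n]
    [DecidableEq R] [NonUnitalNonAssocSemiring R] (X : Matrix m n R) (v : n → R) :
    hammingNorm (X *ᵥ v) ≤ hammingNorm X.vec := by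
  classical
  refine (Finset.card_le_card fun i hi => ?_).trans (Finset.card_image_le (f := Prod.snd))
  obtain ⟨j, -, hj⟩ := Finset.exists_ne_zero_of_sum_ne_zero (Finset.mem_filter_univ i |>.1 hi)
  exact Finset.mem_image.2 ⟨(j, i), Finset.mem_filter_univ _ |>.2 (left_ne_zero_of_mul hj), rfl⟩

end HammingNorm

section Homotopy

theorem mul_mul_eq_of_forall_mem_range {l m n R : Type*} [Semiring R] [Fintype l] [Fintype m]
    [Fintype n] {A : Matrix m n R} {E : Matrix n m R} (hE : A * E * A = A) {M : Matrix m l R}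
    (hM : ∀ v, M *ᵥ v ∈ Set.range A.mulVec) : A * E * M = M := by
  classical
  refine ext_of_mulVec_single fun j => ?_
  obtain ⟨y, hy⟩ := hM (Pi.single j 1)
  rw [← mulVec_mulVec, ← hy, mulVec_mulVec, hE]

variable {m n K : Type*} [Fintype m] [Fintype n] [Field K]

theorem exists_matrix_mul_mul_eq_self (A : Matrix m n K) : ∃ E : Matrix n m K, A * E * A = A := by
  classical
  obtain ⟨g, hg⟩ := (toLin' A).rangeRestrict.exists_rightInverse_of_surjective
    (toLin' A).range_rangeRestrict
  obtain ⟨e, he⟩ := LinearMap.exists_extend g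
  refine ⟨LinearMap.toMatrix' e, toLin'.injective (LinearMap.ext fun x => ?_)⟩
  have he_apply : e (toLin' A x) = g ((toLin' A).rangeRestrict x) :=
    LinearMap.congr_fun he ((toLin' A).rangeRestrict x)
  have hg_apply : toLin' A (g ((toLin' A).rangeRestrict x)) = toLin' A x :=
    congrArg Subtype.val (LinearMap.congr_fun hg ((toLin' A).rangeRestrict x))
  rw [toLin'_mul, toLin'_mul, toLin'_toMatrix', LinearMap.comp_apply, LinearMap.comp_apply,
    he_apply, hg_apply]

theorem exists_homotopy_of_forall_mem_range {B : Matrix m m K} {D : Matrix n n K}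
    {X : Matrix m n K} (hD : D * D = 0) (hX : B * X + X * D = 0)
    (hrange : ∀ v, D *ᵥ v = 0 → X *ᵥ v ∈ Set.range B.mulVec) :
    ∃ S : Matrix m n K, B * S - S * D = X := by
  classical
  obtain ⟨C, hC⟩ := exists_matrix_mul_mul_eq_self B
  obtain ⟨E, hE⟩ := exists_matrix_mul_mul_eq_self D
  -- `E` is a homotopy from the identity to `P`, which takes values in cycles and kills boundaries.
  set P : Matrix n n K := 1 - D * E - E * D with hP
  have hDP : D * P = 0 := by
    simp only [hP, Matrix.mul_sub, Matrix.mul_one, ← Matrix.mul_assoc, hD, hE, Matrix.zero_mul,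
      sub_zero, sub_self]
  have hPD : P * D = 0 := by
    simp only [hP, Matrix.sub_mul, Matrix.one_mul, hE, Matrix.mul_assoc E, hD, Matrix.mul_zero,
      sub_self]
  have hlift : B * C * (X * P) = X * P :=
    mul_mul_eq_of_forall_mem_range hC fun v => by
      rw [← mulVec_mulVec]
      exact hrange _ (by rw [mulVec_mulVec, hDP, zero_mulVec])
  have hBX : B * X = -(X * D) := eq_neg_of_add_eq_zero_left hX
  refine ⟨C * (X * P) - X * E, ?_⟩
  calc
    B * (C * (X * P) - X * E) - (C * (X * P) - X * E) * D
        = B * C * (X * P) - B * X * E - C * X * (P * D) + X * E * D := by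
      simp only [Matrix.mul_sub, Matrix.sub_mul, Matrix.mul_assoc]
      abel
    _ = X * P + X * D * E + X * E * D := by
      rw [hlift, hBX, hPD, Matrix.neg_mul, Matrix.mul_zero, sub_neg_eq_add, sub_zero]
    _ = X := by
      rw [hP, Matrix.mul_sub, Matrix.mul_sub, Matrix.mul_one, Matrix.mul_assoc X D,
        Matrix.mul_assoc X E]
      abel

theorem exists_isLogicalOperator_mulVec {B : Matrix m m K} {D : Matrix n n K} {X : Matrix m n K}
    (hD : D * D = 0) (hX : B * X + X * D = 0) (hlog : ∀ S : Matrix m n K, B * S - S * D ≠ X) :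
    ∃ v, IsLogicalOperator B B (X *ᵥ v) := by
  obtain ⟨v, hv, hXv⟩ : ∃ v, D *ᵥ v = 0 ∧ X *ᵥ v ∉ Set.range B.mulVec := by
    by_contra! hrange
    obtain ⟨S, hS⟩ := exists_homotopy_of_forall_mem_range hD hX hrange
    exact hlog S hS
  refine ⟨v, ?_, hXv⟩
  rw [mulVec_mulVec, eq_neg_of_add_eq_zero_left hX, neg_mulVec, ← mulVec_mulVec, hv, mulVec_zero,
    neg_zero]

end Homotopy

section Product

variable {m n R : Type*} [Fintype m] [Fintype n] [DecidableEq m] [DecidableEq n] [CommRing R]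

theorem isLogicalOperator_vec_iff {A : Matrix n n R} {B : Matrix m m R} {X : Matrix m n R} :
    IsLogicalOperator (A ⊗ₖ 1 + 1 ⊗ₖ B) (A ⊗ₖ 1 - 1 ⊗ₖ B) X.vec ↔
      B * X + X * Aᵀ = 0 ∧ ∀ S : Matrix m n R, B * S - S * Aᵀ ≠ X := by
  have hsum : (A ⊗ₖ 1 + 1 ⊗ₖ B) *ᵥ X.vec = (B * X + X * Aᵀ).vec := by
    rw [add_mulVec, kronecker_mulVec_vec, ← vec_mul_eq_mulVec, Matrix.one_mul, vec_add, add_comm]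
  have hdiff (S : Matrix m n R) :
      (A ⊗ₖ 1 - 1 ⊗ₖ B) *ᵥ (-S).vec = (B * S - S * Aᵀ).vec := by
    rw [sub_mulVec, kronecker_mulVec_vec, ← vec_mul_eq_mulVec, Matrix.one_mul, ← vec_sub,
      Matrix.neg_mul, Matrix.mul_neg, neg_sub_neg]
  have hsurj : Function.Surjective fun S : Matrix m n R => (-S).vec :=
    vec_bijective.surjective.comp neg_surjective
  simp only [IsLogicalOperator, hsum, vec_eq_zero_iff, Set.mem_range, hsurj.exists, hdiff, vec_inj,
    not_exists, ne_eq]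

theorem IsLogicalOperator.comp_swap {A : Matrix n n R} {B : Matrix m m R} {w : n × m → R}
    (hw : IsLogicalOperator (A ⊗ₖ 1 + 1 ⊗ₖ B) (A ⊗ₖ 1 - 1 ⊗ₖ B) w) :
    IsLogicalOperator (B ⊗ₖ 1 + 1 ⊗ₖ A) (B ⊗ₖ 1 - 1 ⊗ₖ A) (w ∘ Prod.swap) := by
  obtain ⟨X, rfl⟩ := vec_bijective.surjective w
  obtain ⟨hcycle, hlog⟩ := isLogicalOperator_vec_iff.1 hw
  rw [← vec_transpose, isLogicalOperator_vec_iff]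
  constructor
  · simpa [add_comm] using congrArg transpose hcycle
  · intro S hS
    apply hlog (-Sᵀ)
    simpa [neg_add_eq_sub] using congrArg transpose hS

theorem le_hammingNorm_of_isLogicalOperator_kronecker {K : Type*} [Field K] [DecidableEq K]
    {A : Matrix n n K} {B : Matrix m m K} (hA : A * A = 0) {d : ℕ}
    (hd : ∀ v, IsLogicalOperator B B v → d ≤ hammingNorm v) {w : n × m → K}
    (hw : IsLogicalOperator (A ⊗ₖ 1 + 1 ⊗ₖ B) (A ⊗ₖ 1 - 1 ⊗ₖ B) w) :
    d ≤ hammingNorm w := by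
  obtain ⟨X, rfl⟩ := vec_bijective.surjective w
  obtain ⟨hcycle, hlog⟩ := isLogicalOperator_vec_iff.1 hw
  have hAT : Aᵀ * Aᵀ = 0 := by rw [← transpose_mul, hA, transpose_zero]
  obtain ⟨v, hv⟩ := exists_isLogicalOperator_mulVec hAT hcycle hlog
  exact (hd _ hv).trans (hammingNorm_mulVec_le_hammingNorm_vec X v)

end Product

-- In characteristic two both matrices are `∂`. In other characteristics `∂` need not square to
-- zero, but `(A ⊗ 1 + 1 ⊗ B) * (A ⊗ 1 - 1 ⊗ B) = 0` always holds.
theorem homological_product_Zdistance_lower_bound_general {m n K : Type*} [Fintype m] [Fintype n]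
    [DecidableEq m] [DecidableEq n] [Field K] [DecidableEq K] {A : Matrix n n K}
    {B : Matrix m m K} (hA : A * A = 0) (hB : B * B = 0) {dA dB : ℕ}
    (hdA : ∀ v, IsLogicalOperator A A v → dA ≤ hammingNorm v)
    (hdB : ∀ v, IsLogicalOperator B B v → dB ≤ hammingNorm v) {w : n × m → K}
    (hw : IsLogicalOperator (A ⊗ₖ 1 + 1 ⊗ₖ B) (A ⊗ₖ 1 - 1 ⊗ₖ B) w) :
    max dA dB ≤ hammingNorm w := by
  refine max_le ?_ (le_hammingNorm_of_isLogicalOperator_kronecker hA hdB hw)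
  rw [← hammingNorm_comp_equiv w (Equiv.prodComm m n)]
  exact le_hammingNorm_of_isLogicalOperator_kronecker hB hdA hw.comp_swap

/-- The Z-distance of the homological product code is at least
`max(d₁, d₂)`: every Z-logical operator of `∂ = δ₁ ⊗ 1 + 1 ⊗ δ₂` has Hamming
weight at least `max(d₁, d₂)`, where `dᵢ` lower-bounds the weight of Z-logical
operators of `δᵢ`. -/
theorem homological_product_Zdistance_lower_bound
    {n₁ n₂ : ℕ} (δ₁ : Matrix (Fin n₁) (Fin n₁) (ZMod 2))
    (δ₂ : Matrix (Fin n₂) (Fin n₂) (ZMod 2))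
    (h₁ : δ₁ * δ₁ = 0) (h₂ : δ₂ * δ₂ = 0)
    (bd : Matrix (Fin n₁ × Fin n₂) (Fin n₁ × Fin n₂) (ZMod 2))
    (hbd : ∀ p q : Fin n₁ × Fin n₂,
      bd p q = δ₁ p.1 q.1 * (if p.2 = q.2 then 1 else 0)
        + (if p.1 = q.1 then 1 else 0) * δ₂ p.2 q.2)
    (d₁ d₂ : ℕ)
    (hd₁ : ∀ v : Fin n₁ → ZMod 2, δ₁.mulVec v = 0 → v ∉ Set.range δ₁.mulVec →
      d₁ ≤ (Finset.univ.filter fun i : Fin n₁ => v i ≠ 0).card)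
    (hd₂ : ∀ v : Fin n₂ → ZMod 2, δ₂.mulVec v = 0 → v ∉ Set.range δ₂.mulVec →
      d₂ ≤ (Finset.univ.filter fun j : Fin n₂ => v j ≠ 0).card)
    (w : Fin n₁ × Fin n₂ → ZMod 2)
    (hker : bd.mulVec w = 0) (hlog : w ∉ Set.range bd.mulVec) :
    max d₁ d₂ ≤ (Finset.univ.filter fun p : Fin n₁ × Fin n₂ => w p ≠ 0).card := by
  have hsum : bd = δ₁ ⊗ₖ 1 + 1 ⊗ₖ δ₂ := Matrix.ext hbd
  have hdiff : bd = δ₁ ⊗ₖ 1 - 1 ⊗ₖ δ₂ :=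
    Matrix.ext fun p q => (hbd p q).trans (CharTwo.sub_eq_add _ _).symm
  exact homological_product_Zdistance_lower_bound_general h₁ h₂
    (fun v hv => hd₁ v hv.1 hv.2) (fun v hv => hd₂ v hv.1 hv.2) ⟨hsum ▸ hker, hdiff ▸ hlog⟩
end

section
/- Let δ₁ be an n₁×n₁ matrix and δ₂ an n₂×n₂ matrix over ℤ₂ with δ₁·δ₁ = 0 and δ₂·δ₂ = 0, and let ∂ = δ₁ ⊗ 1 + 1 ⊗ δ₂. If v₁ is a Z-logical operator of δ₁ (δ₁·v₁ = 0 and v₁ not in the column space of δ₁) and v₂ is a Z-logical operator of δ₂, then the pure tensor w defined by w(i,j) = v₁(i)·v₂(j) is a Z-logical operator of ∂ (∂·w = 0 and w is not in the column space of ∂), and its Hamming weight equals the product of the Hamming weights of v₁ and v₂. Consequently, the Z-distance of the homological product code is at most the product of the Z-distances of the two codes. -/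
/-!
Over a field, a vector `v` lies outside the column space of `A` exactly when some `u` in the left
kernel of `A` pairs nontrivially with `v`. If `u₁` and `u₂` detect `v₁` and `v₂` in this way, then
`u₁ ⊗ u₂` is in the left kernel of both summands of `δ₁ ⊗ 1 + 1 ⊗ δ₂`, and its pairing with
`v₁ ⊗ v₂` is the product `(u₁ ⬝ᵥ v₁) * (u₂ ⬝ᵥ v₂) ≠ 0`, so it detects `v₁ ⊗ v₂`.
-/

open Matrix
open scoped Kronecker

variable {l m n p R K : Type*}

/-- The pure tensor `x ⊗ y` of two vectors, as a vector on the product of their index types; the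
index order is that of the Kronecker product of matrices. -/
def pureTensor [Mul R] (x : m → R) (y : n → R) : m × n → R :=
  fun q => x q.1 * y q.2

theorem zero_pureTensor [MulZeroClass R] (y : n → R) : pureTensor (0 : m → R) y = 0 :=
  funext fun q => zero_mul (y q.2)

theorem pureTensor_zero [MulZeroClass R] (x : m → R) : pureTensor x (0 : n → R) = 0 :=
  funext fun q => mul_zero (x q.1)

theorem hammingNorm_pureTensor [Fintype m] [Fintype n] [MulZeroClass R] [NoZeroDivisors R]
    [DecidableEq R] (x : m → R) (y : n → R) :
    hammingNorm (pureTensor x y) = hammingNorm x * hammingNorm y := by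
  simp only [hammingNorm, pureTensor, mul_ne_zero_iff, ← Finset.card_product,
    ← Finset.filter_product, Finset.univ_product_univ]

section NonUnitalCommSemiring

variable [NonUnitalCommSemiring R]

theorem pureTensor_dotProduct_pureTensor [Fintype m] [Fintype n] (x x' : m → R) (y y' : n → R) :
    pureTensor x y ⬝ᵥ pureTensor x' y' = (x ⬝ᵥ x') * (y ⬝ᵥ y') := by
  simp only [dotProduct, pureTensor, Fintype.sum_mul_sum, Fintype.sum_prod_type, mul_mul_mul_comm]

theorem kronecker_mulVec_pureTensor [Fintype m] [Fintype p] (A : Matrix l m R) (B : Matrix n p R)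
    (x : m → R) (y : p → R) :
    (A ⊗ₖ B) *ᵥ pureTensor x y = pureTensor (A *ᵥ x) (B *ᵥ y) :=
  funext fun q => pureTensor_dotProduct_pureTensor (A q.1) x (B q.2) y

theorem pureTensor_vecMul_kronecker [Fintype l] [Fintype n] (A : Matrix l m R) (B : Matrix n p R)
    (x : l → R) (y : n → R) :
    pureTensor x y ᵥ* (A ⊗ₖ B) = pureTensor (x ᵥ* A) (y ᵥ* B) :=
  funext fun q => pureTensor_dotProduct_pureTensor x (A.col q.1) y (B.col q.2)

theorem kronecker_add_kronecker_mulVec_pureTensor_eq_zero [Fintype m] [Fintype p]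
    {A : Matrix l m R} {B : Matrix n p R} (C : Matrix n p R) (D : Matrix l m R)
    {x : m → R} {y : p → R} (hx : A *ᵥ x = 0) (hy : B *ᵥ y = 0) :
    (A ⊗ₖ C + D ⊗ₖ B) *ᵥ pureTensor x y = 0 := by
  rw [add_mulVec, kronecker_mulVec_pureTensor, kronecker_mulVec_pureTensor, hx, hy,
    zero_pureTensor, pureTensor_zero, add_zero]

theorem pureTensor_vecMul_kronecker_add_kronecker_eq_zero [Fintype l] [Fintype n]
    {A : Matrix l m R} {B : Matrix n p R} (C : Matrix n p R) (D : Matrix l m R)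
    {x : l → R} {y : n → R} (hx : x ᵥ* A = 0) (hy : y ᵥ* B = 0) :
    pureTensor x y ᵥ* (A ⊗ₖ C + D ⊗ₖ B) = 0 := by
  rw [vecMul_add, pureTensor_vecMul_kronecker, pureTensor_vecMul_kronecker, hx, hy,
    zero_pureTensor, pureTensor_zero, add_zero]

end NonUnitalCommSemiring

theorem notMem_range_mulVec_of_vecMul_eq_zero [Fintype m] [Fintype n] [NonUnitalSemiring R]
    {A : Matrix m n R} {u v : m → R} (hu : u ᵥ* A = 0) (huv : u ⬝ᵥ v ≠ 0) :
    v ∉ Set.range A.mulVec := by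
  rintro ⟨x, rfl⟩
  exact huv (by rw [dotProduct_mulVec, hu, zero_dotProduct])

section Field

variable [Field K]

theorem notMem_range_mulVec_iff_exists_vecMul_eq_zero [Fintype m] [Fintype n] {A : Matrix m n K}
    {v : m → K} : v ∉ Set.range A.mulVec ↔ ∃ u : m → K, u ᵥ* A = 0 ∧ u ⬝ᵥ v ≠ 0 := by
  classical
  refine ⟨fun hv => ?_, fun ⟨u, hu, huv⟩ => notMem_range_mulVec_of_vecMul_eq_zero hu huv⟩
  obtain ⟨f, hfv, hf⟩ :=
    Submodule.exists_le_ker_of_notMem (show v ∉ LinearMap.range A.mulVecLin from hv)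
  obtain ⟨u, rfl⟩ := (dotProductEquiv K m).surjective f
  refine ⟨u, dotProduct_eq_zero _ fun x => ?_, hfv⟩
  rw [← dotProduct_mulVec]
  exact hf ⟨x, rfl⟩

theorem pureTensor_notMem_range_kronecker_add_kronecker_mulVec
    [Finite l] [Fintype m] [Finite n] [Fintype p]
    {A : Matrix l m K} {B : Matrix n p K} (C : Matrix n p K) (D : Matrix l m K)
    {v : l → K} {w : n → K} (hv : v ∉ Set.range A.mulVec) (hw : w ∉ Set.range B.mulVec) :
    pureTensor v w ∉ Set.range (A ⊗ₖ C + D ⊗ₖ B).mulVec := by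
  have := Fintype.ofFinite l
  have := Fintype.ofFinite n
  rw [notMem_range_mulVec_iff_exists_vecMul_eq_zero] at hv hw ⊢
  obtain ⟨x, hxA, hxv⟩ := hv
  obtain ⟨y, hyB, hyw⟩ := hw
  refine ⟨pureTensor x y, pureTensor_vecMul_kronecker_add_kronecker_eq_zero C D hxA hyB, ?_⟩
  rw [pureTensor_dotProduct_pureTensor]
  exact mul_ne_zero hxv hyw

end Field

/-- `v` is a Z-logical operator of `δ`: a cycle that is not a boundary. The condition `δ * δ = 0`
making `δ` a boundary operator is kept separate. -/
structure IsZLogical [Fintype n] [NonUnitalNonAssocSemiring R] (δ : Matrix n n R) (v : n → R) :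
    Prop where
  mulVec_eq_zero : δ *ᵥ v = 0
  notMem_range : v ∉ Set.range δ.mulVec

theorem homological_product_tensor_Zlogical_general [Field K] [DecidableEq K]
    [Fintype m] [Fintype n] {δ₁ D : Matrix m m K} {δ₂ C : Matrix n n K}
    {bd : Matrix (m × n) (m × n) K} (hbd : bd = δ₁ ⊗ₖ C + D ⊗ₖ δ₂)
    {v₁ : m → K} (hv₁ : IsZLogical δ₁ v₁) {v₂ : n → K} (hv₂ : IsZLogical δ₂ v₂)
    {w : m × n → K} (hw : w = pureTensor v₁ v₂) :
    IsZLogical bd w ∧ hammingNorm w = hammingNorm v₁ * hammingNorm v₂ := by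
  subst hbd hw
  exact ⟨⟨kronecker_add_kronecker_mulVec_pureTensor_eq_zero C D
        hv₁.mulVec_eq_zero hv₂.mulVec_eq_zero,
      pureTensor_notMem_range_kronecker_add_kronecker_mulVec C D
        hv₁.notMem_range hv₂.notMem_range⟩,
    hammingNorm_pureTensor v₁ v₂⟩

/-- The pure tensor of Z-logical operators `v₁`, `v₂` of `δ₁`,
`δ₂` is a Z-logical operator of the homological product boundary operator
`∂ = δ₁ ⊗ 1 + 1 ⊗ δ₂`, of Hamming weight `wt(v₁)·wt(v₂)`; hence the Z-distance
of the product code is at most the product of the Z-distances. -/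
theorem homological_product_tensor_Zlogical
    {n₁ n₂ : ℕ} (δ₁ : Matrix (Fin n₁) (Fin n₁) (ZMod 2))
    (δ₂ : Matrix (Fin n₂) (Fin n₂) (ZMod 2))
    (h₁ : δ₁ * δ₁ = 0) (h₂ : δ₂ * δ₂ = 0)
    (bd : Matrix (Fin n₁ × Fin n₂) (Fin n₁ × Fin n₂) (ZMod 2))
    (hbd : ∀ p q : Fin n₁ × Fin n₂,
      bd p q = δ₁ p.1 q.1 * (if p.2 = q.2 then 1 else 0)
        + (if p.1 = q.1 then 1 else 0) * δ₂ p.2 q.2)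
    (v₁ : Fin n₁ → ZMod 2) (hv₁ker : δ₁.mulVec v₁ = 0)
    (hv₁log : v₁ ∉ Set.range δ₁.mulVec)
    (v₂ : Fin n₂ → ZMod 2) (hv₂ker : δ₂.mulVec v₂ = 0)
    (hv₂log : v₂ ∉ Set.range δ₂.mulVec)
    (w : Fin n₁ × Fin n₂ → ZMod 2)
    (hw : ∀ p : Fin n₁ × Fin n₂, w p = v₁ p.1 * v₂ p.2) :
    bd.mulVec w = 0 ∧ w ∉ Set.range bd.mulVec ∧
      (Finset.univ.filter fun p : Fin n₁ × Fin n₂ => w p ≠ 0).card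
        = (Finset.univ.filter fun i : Fin n₁ => v₁ i ≠ 0).card
          * (Finset.univ.filter fun j : Fin n₂ => v₂ j ≠ 0).card := by
  obtain ⟨⟨hker, hlog⟩, hwt⟩ := homological_product_tensor_Zlogical_general
    (C := 1) (D := 1) (Matrix.ext hbd) ⟨hv₁ker, hv₁log⟩ ⟨hv₂ker, hv₂log⟩ (funext hw)
  exact ⟨hker, hlog, hwt⟩
end

section
/- Let H_X (size l_X×n) and H_Z (size l_Z×n) be matrices over ℤ₂ with H_X·H_Zᵀ = 0. Define the doubled code on qubits indexed by Fin 4 × Fin n with X-check matrix G_X consisting of the rows: (s,0,s,0) for each row s of H_X, (0,t,t,0) for each row t of H_Z, and (e_j,e_j,e_j,e_j) for each standard basis vector e_j (j ∈ Fin n); and Z-check matrix G_Z consisting of the rows: (t,0,0,t) for each row t of H_Z, (0,s,0,s) for each row s of H_X, and (e_j,e_j,e_j,e_j) for each j ∈ Fin n (here (a,b,c,d) denotes the vector on Fin 4 × Fin n whose block-0,1,2,3 components are a,b,c,d). Then G_X·G_Zᵀ = 0, i.e., the doubled code is a valid CSS code. -/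
/-!
The rows `(1,0,1,0)`, `(0,1,1,0)` and `(1,0,0,1)`, `(0,1,0,1)` are the logical `X` and `Z` operators
of the `[[4,2,2]]` code, and `(1,1,1,1)` is its stabilizer in both bases. Modulo 2 each logical row
meets only its own partner oddly, and the stabilizer row meets everything evenly. Every row of the
doubled code is a tensor product `v ⊗ s` with `v` one of these rows, and inner products of tensors
are multiplicative, so only the blocks `H_X H_Zᵀ` and `H_Z H_Xᵀ` survive in `G_X G_Zᵀ`; both vanish.
-/

open Matrix

variable {R ι κ n ιX ιZ : Type*}

/-- The matrix whose rows are the tensor products `v ⊗ s`, for `s` a row of `H`: block `a` of such a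
row is `v a • s`. It is the Kronecker product of the one-row matrix `v` with `H`, with the
one-element row index dropped. -/
def kroneckerRow [Mul R] (v : κ → R) (H : Matrix ι n R) : Matrix ι (κ × n) R :=
  of fun i q => v q.1 * H i q.2

theorem kroneckerRow_apply [Mul R] (v : κ → R) (H : Matrix ι n R) (i : ι) (q : κ × n) :
    kroneckerRow v H i q = v q.1 * H i q.2 :=
  rfl

theorem kroneckerRow_mul_transpose {ι' : Type*} [NonUnitalCommSemiring R] [Fintype κ] [Fintype n]
    (v w : κ → R) (H : Matrix ι n R) (K : Matrix ι' n R) :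
    kroneckerRow v H * (kroneckerRow w K)ᵀ = (v ⬝ᵥ w) • (H * Kᵀ) := by
  ext i k
  simp only [mul_apply, transpose_apply, kroneckerRow_apply, Matrix.smul_apply, smul_eq_mul,
    dotProduct, Fintype.sum_prod_type, Finset.sum_mul_sum, mul_mul_mul_comm]

/-- The `X`-type operators of the `[[4,2,2]]` code: two logical operators, then the stabilizer. -/
def fourTwoTwoX (R : Type*) [Zero R] [One R] : Matrix (Fin 3) (Fin 4) R :=
  !![1, 0, 1, 0;
     0, 1, 1, 0;
     1, 1, 1, 1]

/-- The `Z`-type operators of the `[[4,2,2]]` code: the logical operators conjugate to those of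
`fourTwoTwoX`, in the same order, then the stabilizer. -/
def fourTwoTwoZ (R : Type*) [Zero R] [One R] : Matrix (Fin 3) (Fin 4) R :=
  !![1, 0, 0, 1;
     0, 1, 0, 1;
     1, 1, 1, 1]

theorem fourTwoTwoX_dotProduct_fourTwoTwoZ [Semiring R] [CharP R 2] (a b : Fin 3) :
    fourTwoTwoX R a ⬝ᵥ fourTwoTwoZ R b = diagonal ![1, 1, 0] a b := by
  fin_cases a <;> fin_cases b <;>
    simp [fourTwoTwoX, fourTwoTwoZ, dotProduct, Fin.sum_univ_four, CharTwo.add_self_eq_zero]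

section DoubledCode

variable [DecidableEq n]

/-- The `X`-check matrix `G_X` of the doubled code, with rows `(s,0,s,0)` for `s` in `HX`,
`(0,t,t,0)` for `t` in `HZ`, and `(e_j,e_j,e_j,e_j)`. -/
def doubledX [MulZeroOneClass R] (HX : Matrix ιX n R) (HZ : Matrix ιZ n R) :
    Matrix (ιX ⊕ ιZ ⊕ n) (Fin 4 × n) R :=
  fromRows (kroneckerRow (fourTwoTwoX R 0) HX)
    (fromRows (kroneckerRow (fourTwoTwoX R 1) HZ) (kroneckerRow (fourTwoTwoX R 2) 1))

/-- The `Z`-check matrix `G_Z` of the doubled code, with rows `(t,0,0,t)` for `t` in `HZ`,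
`(0,s,0,s)` for `s` in `HX`, and `(e_j,e_j,e_j,e_j)`. -/
def doubledZ [MulZeroOneClass R] (HX : Matrix ιX n R) (HZ : Matrix ιZ n R) :
    Matrix (ιZ ⊕ ιX ⊕ n) (Fin 4 × n) R :=
  fromRows (kroneckerRow (fourTwoTwoZ R 0) HZ)
    (fromRows (kroneckerRow (fourTwoTwoZ R 1) HX) (kroneckerRow (fourTwoTwoZ R 2) 1))

theorem eq_doubledX [MulZeroOneClass R] {HX : Matrix ιX n R} {HZ : Matrix ιZ n R}
    {G : Matrix (ιX ⊕ ιZ ⊕ n) (Fin 4 × n) R}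
    (hX : ∀ i q, G (Sum.inl i) q = if q.1 = 0 ∨ q.1 = 2 then HX i q.2 else 0)
    (hZ : ∀ i q, G (Sum.inr (Sum.inl i)) q = if q.1 = 1 ∨ q.1 = 2 then HZ i q.2 else 0)
    (hS : ∀ j q, G (Sum.inr (Sum.inr j)) q = if q.2 = j then 1 else 0) :
    G = doubledX HX HZ := by
  ext r ⟨a, j⟩
  rcases r with i | i | i <;> fin_cases a <;>
    simp [hX, hZ, hS, doubledX, kroneckerRow_apply, fourTwoTwoX, one_apply, eq_comm]

theorem eq_doubledZ [MulZeroOneClass R] {HX : Matrix ιX n R} {HZ : Matrix ιZ n R}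
    {G : Matrix (ιZ ⊕ ιX ⊕ n) (Fin 4 × n) R}
    (hZ : ∀ i q, G (Sum.inl i) q = if q.1 = 0 ∨ q.1 = 3 then HZ i q.2 else 0)
    (hX : ∀ i q, G (Sum.inr (Sum.inl i)) q = if q.1 = 1 ∨ q.1 = 3 then HX i q.2 else 0)
    (hS : ∀ j q, G (Sum.inr (Sum.inr j)) q = if q.2 = j then 1 else 0) :
    G = doubledZ HX HZ := by
  ext r ⟨a, j⟩
  rcases r with i | i | i <;> fin_cases a <;>
    simp [hX, hZ, hS, doubledZ, kroneckerRow_apply, fourTwoTwoZ, one_apply, eq_comm]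

theorem doubledX_mul_doubledZ_transpose [CommSemiring R] [CharP R 2] [Fintype n]
    (HX : Matrix ιX n R) (HZ : Matrix ιZ n R) :
    doubledX HX HZ * (doubledZ HX HZ)ᵀ =
      fromBlocks (HX * HZᵀ) 0 0 (fromBlocks (HZ * HXᵀ) 0 0 0) := by
  simp only [doubledX, doubledZ, transpose_fromRows, fromRows_mul_fromCols]
  simp [fromRows_mul, mul_fromCols, kroneckerRow_mul_transpose, fourTwoTwoX_dotProduct_fourTwoTwoZ]

theorem doubled_code_is_css_general [CommSemiring R] [CharP R 2] [Fintype n]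
    (HX : Matrix ιX n R) (HZ : Matrix ιZ n R) (hcomm : HX * HZᵀ = 0) :
    doubledX HX HZ * (doubledZ HX HZ)ᵀ = 0 := by
  have hcomm' : HZ * HXᵀ = 0 := by
    rw [← transpose_transpose HZ, ← transpose_mul, hcomm, transpose_zero]
  simp only [doubledX_mul_doubledZ_transpose, hcomm, hcomm', fromBlocks_zero]

end DoubledCode

/-- The doubled code of a CSS code `(H_X, H_Z)` (with
`H_X·H_Zᵀ = 0`) is a valid CSS code: its check matrices `G_X` (rows `(s,0,s,0)`,
`(0,t,t,0)`, `(e_j,e_j,e_j,e_j)`) and `G_Z` (rows `(t,0,0,t)`, `(0,s,0,s)`,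
`(e_j,e_j,e_j,e_j)`) satisfy `G_X·G_Zᵀ = 0`. -/
theorem doubled_code_is_css
    {lX lZ n : ℕ} (HX : Matrix (Fin lX) (Fin n) (ZMod 2))
    (HZ : Matrix (Fin lZ) (Fin n) (ZMod 2))
    (hcomm : HX * HZ.transpose = 0)
    (GX : Matrix (Fin lX ⊕ Fin lZ ⊕ Fin n) (Fin 4 × Fin n) (ZMod 2))
    (GZ : Matrix (Fin lZ ⊕ Fin lX ⊕ Fin n) (Fin 4 × Fin n) (ZMod 2))
    (hGX₁ : ∀ (i : Fin lX) (q : Fin 4 × Fin n),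
      GX (Sum.inl i) q = if q.1 = 0 ∨ q.1 = 2 then HX i q.2 else 0)
    (hGX₂ : ∀ (i : Fin lZ) (q : Fin 4 × Fin n),
      GX (Sum.inr (Sum.inl i)) q = if q.1 = 1 ∨ q.1 = 2 then HZ i q.2 else 0)
    (hGX₃ : ∀ (j : Fin n) (q : Fin 4 × Fin n),
      GX (Sum.inr (Sum.inr j)) q = if q.2 = j then 1 else 0)
    (hGZ₁ : ∀ (i : Fin lZ) (q : Fin 4 × Fin n),
      GZ (Sum.inl i) q = if q.1 = 0 ∨ q.1 = 3 then HZ i q.2 else 0)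
    (hGZ₂ : ∀ (i : Fin lX) (q : Fin 4 × Fin n),
      GZ (Sum.inr (Sum.inl i)) q = if q.1 = 1 ∨ q.1 = 3 then HX i q.2 else 0)
    (hGZ₃ : ∀ (j : Fin n) (q : Fin 4 × Fin n),
      GZ (Sum.inr (Sum.inr j)) q = if q.2 = j then 1 else 0) :
    GX * GZ.transpose = 0 := by
  rw [eq_doubledX hGX₁ hGX₂ hGX₃, eq_doubledZ hGZ₁ hGZ₂ hGZ₃,
    doubled_code_is_css_general HX HZ hcomm]
end

section
/- Let H_X (size l_X×n) and H_Z (size l_Z×n) be matrices over ℤ₂. With the doubled-code check matrices G_X (rows (s,0,s,0) for rows s of H_X, (0,t,t,0) for rows t of H_Z, and (e_j,e_j,e_j,e_j) for j ∈ Fin n) and G_Z (rows (t,0,0,t) for rows t of H_Z, (0,s,0,s) for rows s of H_X, and (e_j,e_j,e_j,e_j) for j ∈ Fin n), the row space of G_X equals the row space of G_Z. (This is the complete symmetry between X- and Z-stabilizers of the doubled code, underlying its transversal Hadamard gate.) -/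
/-!
Modulo the repetitions `(v, …, v)`, a vector copied onto a set of blocks is the negative of the same
vector copied onto the complementary blocks. Both check matrices have all repetitions in their row
space, and the blocks carrying `H_X` (resp. `H_Z`) in `G_Z` are complementary to those in `G_X`.
-/

theorem span_range_linearMap_apply {R M N α : Type*} [Semiring R] [AddCommMonoid M]
    [AddCommMonoid N] [Module R M] [Module R N] (f : M →ₗ[R] N) (v : α → M) :
    Submodule.span R (Set.range fun i => f (v i)) = (Submodule.span R (Set.range v)).map f := by
  rw [Submodule.map_span, ← Set.range_comp, Function.comp_def]

section ComplementaryMaps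

variable {R M N : Type*} [Ring R] [AddCommMonoid M] [AddCommGroup N] [Module R M] [Module R N]
  {f g : M →ₗ[R] N} {V : Submodule R M} {W : Submodule R N}

theorem map_le_map_sup_of_map_add_le (h : V.map (f + g) ≤ W) : V.map g ≤ V.map f ⊔ W := by
  rintro _ ⟨v, hv, rfl⟩
  have hf : f v ∈ V.map f ⊔ W := Submodule.mem_sup_left (Submodule.mem_map_of_mem hv)
  have hfg : f v + g v ∈ V.map f ⊔ W :=
    Submodule.mem_sup_right (h (Submodule.mem_map_of_mem (f := f + g) hv))
  exact (Submodule.add_mem_iff_right _ hf).1 hfg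

theorem map_sup_eq_map_sup_of_map_add_le (h : V.map (f + g) ≤ W) : V.map f ⊔ W = V.map g ⊔ W :=
  le_antisymm
    (sup_le (map_le_map_sup_of_map_add_le (add_comm f g ▸ h)) le_sup_right)
    (sup_le (map_le_map_sup_of_map_add_le h) le_sup_right)

end ComplementaryMaps

section BlockCopy

variable {R ι κ lX lZ : Type*}

/-- The linear map sending `v` to the vector on `ι × κ` whose block `a` is `v` if `a ∈ s` and `0`
otherwise; it builds the rows of the check matrices, e.g. `(v, 0, v, 0)` for `s = {0, 2}`. -/
noncomputable def blockCopy (R κ : Type*) [Semiring R] (s : Set ι) :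
    (κ → R) →ₗ[R] (ι × κ → R) where
  toFun v := (Prod.fst ⁻¹' s).indicator (v ∘ Prod.snd)
  map_add' v w := Set.indicator_add _ (v ∘ Prod.snd) (w ∘ Prod.snd)
  map_smul' c v := Set.indicator_const_smul _ c (v ∘ Prod.snd)

theorem blockCopy_apply [Semiring R] (s : Set ι) [DecidablePred (· ∈ s)] (v : κ → R) (q : ι × κ) :
    blockCopy R κ s v q = if q.1 ∈ s then v q.2 else 0 := by
  classical
  simp only [blockCopy, LinearMap.coe_mk, AddHom.coe_mk, Set.indicator_apply, Set.mem_preimage,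
    Function.comp_apply]

theorem blockCopy_add_blockCopy_compl [Semiring R] (s : Set ι) :
    blockCopy R κ s + blockCopy R κ sᶜ = blockCopy R κ Set.univ :=
  LinearMap.ext fun v => by
    simp [blockCopy, Set.indicator_self_add_compl]

theorem map_blockCopy_sup_range_eq_compl [Ring R] (s : Set ι) (V : Submodule R (κ → R)) :
    V.map (blockCopy R κ s) ⊔ (blockCopy R κ (Set.univ : Set ι)).range =
      V.map (blockCopy R κ sᶜ) ⊔ (blockCopy R κ (Set.univ : Set ι)).range :=
  map_sup_eq_map_sup_of_map_add_le <| by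
    rw [blockCopy_add_blockCopy_compl]
    exact LinearMap.map_le_range

theorem span_range_blockCopy_single [Semiring R] [Finite κ] [DecidableEq κ] (s : Set ι) :
    Submodule.span R (Set.range fun j => blockCopy R κ s (Pi.single j 1)) =
      (blockCopy R κ s).range := by
  simpa only [Module.Basis.span_eq, Submodule.map_top, Pi.basisFun_apply] using
    span_range_linearMap_apply (blockCopy R κ s) (Pi.basisFun R κ)

theorem span_range_doubled_checks [Semiring R] [Finite κ] [DecidableEq κ] {s t : Set ι}
    [DecidablePred (· ∈ s)] [DecidablePred (· ∈ t)] {H : lX → κ → R} {H' : lZ → κ → R}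
    {G : lX ⊕ lZ ⊕ κ → ι × κ → R}
    (h₁ : ∀ i q, G (Sum.inl i) q = if q.1 ∈ s then H i q.2 else 0)
    (h₂ : ∀ i q, G (Sum.inr (Sum.inl i)) q = if q.1 ∈ t then H' i q.2 else 0)
    (h₃ : ∀ j q, G (Sum.inr (Sum.inr j)) q = if q.2 = j then 1 else 0) :
    Submodule.span R (Set.range G) =
      (Submodule.span R (Set.range H)).map (blockCopy R κ s) ⊔
        ((Submodule.span R (Set.range H')).map (blockCopy R κ t) ⊔
          (blockCopy R κ (Set.univ : Set ι)).range) := by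
  have hG : G = Sum.elim (fun i => blockCopy R κ s (H i))
      (Sum.elim (fun i => blockCopy R κ t (H' i))
        fun j => blockCopy R κ Set.univ (Pi.single j 1)) := by
    ext (i | i | j) q
    · simp only [h₁, Sum.elim_inl, blockCopy_apply]
    · simp only [h₂, Sum.elim_inr, Sum.elim_inl, blockCopy_apply]
    · simp only [h₃, Sum.elim_inr, blockCopy_apply, Set.mem_univ, if_true, Pi.single_apply]
  rw [hG, Set.Sum.elim_range, Set.Sum.elim_range, Submodule.span_union, Submodule.span_union,
    span_range_blockCopy_single, span_range_linearMap_apply, span_range_linearMap_apply]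

theorem doubled_code_row_space_symmetry_general [Ring R] [Finite κ] [DecidableEq κ]
    {s s' t t' : Set ι} [DecidablePred (· ∈ s)] [DecidablePred (· ∈ s')]
    [DecidablePred (· ∈ t)] [DecidablePred (· ∈ t')] (hs : sᶜ = s') (ht : tᶜ = t')
    (HX : Matrix lX κ R) (HZ : Matrix lZ κ R)
    (GX : Matrix (lX ⊕ lZ ⊕ κ) (ι × κ) R) (GZ : Matrix (lZ ⊕ lX ⊕ κ) (ι × κ) R)
    (hGX₁ : ∀ i q, GX (Sum.inl i) q = if q.1 ∈ s then HX i q.2 else 0)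
    (hGX₂ : ∀ i q, GX (Sum.inr (Sum.inl i)) q = if q.1 ∈ t then HZ i q.2 else 0)
    (hGX₃ : ∀ j q, GX (Sum.inr (Sum.inr j)) q = if q.2 = j then 1 else 0)
    (hGZ₁ : ∀ i q, GZ (Sum.inl i) q = if q.1 ∈ t' then HZ i q.2 else 0)
    (hGZ₂ : ∀ i q, GZ (Sum.inr (Sum.inl i)) q = if q.1 ∈ s' then HX i q.2 else 0)
    (hGZ₃ : ∀ j q, GZ (Sum.inr (Sum.inr j)) q = if q.2 = j then 1 else 0) :
    Submodule.span R (Set.range GX) = Submodule.span R (Set.range GZ) := by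
  subst hs ht
  rw [span_range_doubled_checks hGX₁ hGX₂ hGX₃, span_range_doubled_checks hGZ₁ hGZ₂ hGZ₃,
    map_blockCopy_sup_range_eq_compl t, sup_left_comm, map_blockCopy_sup_range_eq_compl s]

end BlockCopy

/-- For the doubled code of a CSS code `(H_X, H_Z)`, the row
space of the X-check matrix `G_X` equals the row space of the Z-check matrix
`G_Z` — the complete X/Z symmetry underlying its transversal Hadamard. -/
theorem doubled_code_row_space_symmetry
    {lX lZ n : ℕ} (HX : Matrix (Fin lX) (Fin n) (ZMod 2))
    (HZ : Matrix (Fin lZ) (Fin n) (ZMod 2))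
    (GX : Matrix (Fin lX ⊕ Fin lZ ⊕ Fin n) (Fin 4 × Fin n) (ZMod 2))
    (GZ : Matrix (Fin lZ ⊕ Fin lX ⊕ Fin n) (Fin 4 × Fin n) (ZMod 2))
    (hGX₁ : ∀ (i : Fin lX) (q : Fin 4 × Fin n),
      GX (Sum.inl i) q = if q.1 = 0 ∨ q.1 = 2 then HX i q.2 else 0)
    (hGX₂ : ∀ (i : Fin lZ) (q : Fin 4 × Fin n),
      GX (Sum.inr (Sum.inl i)) q = if q.1 = 1 ∨ q.1 = 2 then HZ i q.2 else 0)
    (hGX₃ : ∀ (j : Fin n) (q : Fin 4 × Fin n),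
      GX (Sum.inr (Sum.inr j)) q = if q.2 = j then 1 else 0)
    (hGZ₁ : ∀ (i : Fin lZ) (q : Fin 4 × Fin n),
      GZ (Sum.inl i) q = if q.1 = 0 ∨ q.1 = 3 then HZ i q.2 else 0)
    (hGZ₂ : ∀ (i : Fin lX) (q : Fin 4 × Fin n),
      GZ (Sum.inr (Sum.inl i)) q = if q.1 = 1 ∨ q.1 = 3 then HX i q.2 else 0)
    (hGZ₃ : ∀ (j : Fin n) (q : Fin 4 × Fin n),
      GZ (Sum.inr (Sum.inr j)) q = if q.2 = j then 1 else 0) :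
    Submodule.span (ZMod 2) (Set.range GX) = Submodule.span (ZMod 2) (Set.range GZ) :=
  doubled_code_row_space_symmetry_general (s := {0, 2}) (s' := {1, 3}) (t := {1, 2}) (t' := {0, 3})
    (Set.ext (by decide)) (Set.ext (by decide))
    HX HZ GX GZ hGX₁ hGX₂ hGX₃ hGZ₁ hGZ₂ hGZ₃
end

section
/- Let H_X (size l_X×n) and H_Z (size l_Z×n) be matrices over ℤ₂ with rank(H_X) = l_X and rank(H_Z) = l_Z. Then the doubled-code X-check matrix G_X (rows (s,0,s,0) for rows s of H_X, (0,t,t,0) for rows t of H_Z, and (e_j,e_j,e_j,e_j) for j ∈ Fin n) has rank n + l_X + l_Z. Consequently the doubled code on 4n qubits encodes 4n − 2(n + l_X + l_Z) = 2(n − l_X − l_Z) logical qubits, i.e., twice the number encoded by the original code. -/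
/-!
Stacking identity blocks along the three patterns `(1,0,1,0)`, `(0,1,1,0)`, `(1,1,1,1)` gives a
`3n × 4n` matrix through which the check matrix factors, with left factor `diag(H_X, H_Z, 1)`.
The three patterns have the dual family `(1,0,0,-1)`, `(0,1,0,-1)`, `(0,0,0,1)`, so the
`3n × 4n` matrix has a right inverse, and multiplying `diag(H_X, H_Z, 1)` by it on the right does
not change the rank, which is `rank H_X + rank H_Z + n`.
-/

open Matrix Module

section Rank

variable {R : Type*} [CommRing R] [IsDomain R]

theorem finrank_prod_of_isDomain (M N : Type*) [AddCommGroup M] [Module R M] [Module.Finite R M]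
    [AddCommGroup N] [Module R N] [Module.Finite R N] :
    finrank R (M × N) = finrank R M + finrank R N := by
  have hquot : finrank R ((M × N) ⧸ (LinearMap.fst R M N).ker) = finrank R M :=
    ((LinearMap.fst R M N).quotKerEquivOfSurjective LinearMap.fst_surjective).finrank_eq
  have hker : finrank R (LinearMap.fst R M N).ker = finrank R N := by
    rw [← LinearMap.range_inr, LinearMap.finrank_range_of_inj LinearMap.inr_injective]
  rw [← (LinearMap.fst R M N).ker.finrank_quotient_add_finrank, hquot, hker]

theorem finrank_submodule_prod {M N : Type*} [AddCommGroup M] [Module R M] [AddCommGroup N]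
    [Module R N] (p : Submodule R M) (q : Submodule R N) [Module.Finite R p] [Module.Finite R q] :
    finrank R (p.prod q) = finrank R p + finrank R q := by
  have hrange : (p.subtype.prodMap q.subtype).range = p.prod q := by
    rw [LinearMap.range_prodMap, p.range_subtype, q.range_subtype]
  rw [← hrange, LinearMap.finrank_range_of_inj
    (p.injective_subtype.prodMap q.injective_subtype), finrank_prod_of_isDomain]

theorem rank_fromBlocks_zero_zero {l m n o : Type*} [Fintype l] [Fintype m]
    (A : Matrix n l R) (D : Matrix o m R) :
    (fromBlocks A 0 0 D).rank = A.rank + D.rank := by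
  let eDom := LinearEquiv.sumArrowLequivProdArrow l m R R
  let eCod := LinearEquiv.sumArrowLequivProdArrow n o R R
  have hprod : (fromBlocks A 0 0 D).mulVecLin =
      eCod.symm.toLinearMap ∘ₗ A.mulVecLin.prodMap D.mulVecLin ∘ₗ eDom.toLinearMap := by
    refine LinearMap.ext fun v => ?_
    rw [mulVecLin_apply, fromBlocks_mulVec, zero_mulVec, zero_mulVec, add_zero, zero_add]
    rfl
  calc (fromBlocks A 0 0 D).rank = finrank R (A.mulVecLin.prodMap D.mulVecLin).range := by
        rw [Matrix.rank, hprod, LinearMap.range_comp, LinearEquiv.finrank_map_eq,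
          LinearMap.range_comp_of_range_eq_top _ eDom.range]
    _ = A.rank + D.rank := by
        rw [LinearMap.range_prodMap, finrank_submodule_prod, Matrix.rank, Matrix.rank]

end Rank

theorem rank_mul_eq_left_of_mul_eq_one {R l m n : Type*} [CommSemiring R] [StrongRankCondition R]
    [Fintype m] [DecidableEq m] [Fintype n] (A : Matrix l m R) {B : Matrix m n R}
    {C : Matrix n m R} (h : B * C = 1) : (A * B).rank = A.rank := by
  refine (rank_mul_le_left A B).antisymm ?_
  calc A.rank = (A * B * C).rank := by rw [Matrix.mul_assoc, h, Matrix.mul_one]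
    _ ≤ (A * B).rank := rank_mul_le_left _ C

/-- The block row `(w₀ A | w₁ A | ⋯)`, whose rows are the `(w₀ s, w₁ s, …)` for `s` a row of `A`.
The columns are indexed by pairs (block, position inside the block). -/
def blockRow {R k m n : Type*} [Mul R] (w : k → R) (A : Matrix m n R) : Matrix m (k × n) R :=
  of fun i q => w q.1 * A i q.2

theorem mul_blockRow {R k l m n : Type*} [CommSemiring R] [Fintype m] (w : k → R)
    (A : Matrix l m R) (B : Matrix m n R) : A * blockRow w B = blockRow w (A * B) := by
  ext i q
  simp only [blockRow, mul_apply, of_apply, Finset.mul_sum, mul_left_comm]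

theorem blockRow_mul_transpose_blockRow {R k l m n : Type*} [CommSemiring R] [Fintype k]
    [Fintype n] (w v : k → R) (A : Matrix l n R) (B : Matrix m n R) :
    blockRow w A * (blockRow v B)ᵀ = (w ⬝ᵥ v) • (A * Bᵀ) := by
  ext i j
  simp only [blockRow, mul_apply, transpose_apply, Matrix.smul_apply, of_apply, smul_eq_mul,
    dotProduct, Finset.sum_mul_sum, Fintype.sum_prod_type, mul_mul_mul_comm]

section DoubledCode

variable {R m p n : Type*} [CommRing R] [DecidableEq n]

/-- The `X`-check matrix `G_X` of the doubled code of `(H_X, H_Z)`, with rows `(s,0,s,0)`,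
`(0,t,t,0)` and `(e_j,e_j,e_j,e_j)`; the entries of `H_X` and `H_Z` may lie in any commutative
ring. -/
def doubledXCheck (HX : Matrix m n R) (HZ : Matrix p n R) : Matrix (m ⊕ p ⊕ n) (Fin 4 × n) R :=
  fromRows (blockRow ![1, 0, 1, 0] HX)
    (fromRows (blockRow ![0, 1, 1, 0] HZ) (blockRow ![1, 1, 1, 1] 1))

theorem eq_doubledXCheck {HX : Matrix m n R} {HZ : Matrix p n R}
    {G : Matrix (m ⊕ p ⊕ n) (Fin 4 × n) R}
    (hX : ∀ i q, G (.inl i) q = if q.1 = 0 ∨ q.1 = 2 then HX i q.2 else 0)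
    (hZ : ∀ i q, G (.inr (.inl i)) q = if q.1 = 1 ∨ q.1 = 2 then HZ i q.2 else 0)
    (hE : ∀ j q, G (.inr (.inr j)) q = if q.2 = j then 1 else 0) :
    G = doubledXCheck HX HZ := by
  ext r ⟨b, c⟩
  rcases r with i | i | j <;> fin_cases b <;>
    simp [hX, hZ, hE, doubledXCheck, blockRow, one_apply, eq_comm]

variable [Fintype n]

theorem fromBlocks_mul_doubledXCheck_one (HX : Matrix m n R) (HZ : Matrix p n R) :
    (fromBlocks HX 0 0 (fromBlocks HZ 0 0 1) : Matrix (m ⊕ p ⊕ n) (n ⊕ n ⊕ n) R) *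
      doubledXCheck (1 : Matrix n n R) (1 : Matrix n n R) = doubledXCheck HX HZ := by
  simp only [doubledXCheck, fromBlocks_mul_fromRows, mul_blockRow, Matrix.mul_one,
    Matrix.zero_mul, add_zero, zero_add]

/-- The right inverse of `doubledXCheck 1 1`, built from the family dual to its three block
patterns. -/
def doubledXCheckRightInverse (R n : Type*) [CommRing R] [DecidableEq n] :
    Matrix (Fin 4 × n) (n ⊕ n ⊕ n) R :=
  fromCols (blockRow ![1, 0, 0, -1] 1)ᵀ
    (fromCols (blockRow ![0, 1, 0, -1] 1)ᵀ (blockRow ![0, 0, 0, 1] 1)ᵀ)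

theorem doubledXCheck_one_mul_rightInverse :
    doubledXCheck (1 : Matrix n n R) (1 : Matrix n n R) * doubledXCheckRightInverse R n = 1 := by
  rw [doubledXCheck, doubledXCheckRightInverse, fromRows_mul_fromCols, mul_fromCols, fromRows_mul,
    fromRows_mul_fromCols]
  simp [blockRow_mul_transpose_blockRow]

theorem doubled_code_rank_general [IsDomain R] (HX : Matrix m n R) (HZ : Matrix p n R)
    (GX : Matrix (m ⊕ p ⊕ n) (Fin 4 × n) R)
    (hGX₁ : ∀ i q, GX (.inl i) q = if q.1 = 0 ∨ q.1 = 2 then HX i q.2 else 0)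
    (hGX₂ : ∀ i q, GX (.inr (.inl i)) q = if q.1 = 1 ∨ q.1 = 2 then HZ i q.2 else 0)
    (hGX₃ : ∀ j q, GX (.inr (.inr j)) q = if q.2 = j then 1 else 0) :
    GX.rank = Fintype.card n + HX.rank + HZ.rank ∧
      ((4 * Fintype.card n : ℕ) : ℤ) - 2 * (GX.rank : ℤ) =
        2 * ((Fintype.card n : ℤ) - (HX.rank : ℤ) - (HZ.rank : ℤ)) := by
  have hrank : GX.rank = Fintype.card n + HX.rank + HZ.rank := by
    rw [eq_doubledXCheck hGX₁ hGX₂ hGX₃, ← fromBlocks_mul_doubledXCheck_one,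
      rank_mul_eq_left_of_mul_eq_one _ doubledXCheck_one_mul_rightInverse,
      rank_fromBlocks_zero_zero, rank_fromBlocks_zero_zero, rank_one]
    ring
  exact ⟨hrank, by rw [hrank]; push_cast; ring⟩

end DoubledCode

/-- If `H_X`, `H_Z` have full ranks `l_X`, `l_Z`, then the
doubled-code X-check matrix `G_X` has rank `n + l_X + l_Z`; consequently the
doubled code on `4n` qubits encodes `4n - 2(n + l_X + l_Z) = 2(n - l_X - l_Z)`
logical qubits, twice the number encoded by the original code. -/
theorem doubled_code_rank
    {lX lZ n : ℕ} (HX : Matrix (Fin lX) (Fin n) (ZMod 2))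
    (HZ : Matrix (Fin lZ) (Fin n) (ZMod 2))
    (hrX : HX.rank = lX) (hrZ : HZ.rank = lZ)
    (GX : Matrix (Fin lX ⊕ Fin lZ ⊕ Fin n) (Fin 4 × Fin n) (ZMod 2))
    (hGX₁ : ∀ (i : Fin lX) (q : Fin 4 × Fin n),
      GX (Sum.inl i) q = if q.1 = 0 ∨ q.1 = 2 then HX i q.2 else 0)
    (hGX₂ : ∀ (i : Fin lZ) (q : Fin 4 × Fin n),
      GX (Sum.inr (Sum.inl i)) q = if q.1 = 1 ∨ q.1 = 2 then HZ i q.2 else 0)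
    (hGX₃ : ∀ (j : Fin n) (q : Fin 4 × Fin n),
      GX (Sum.inr (Sum.inr j)) q = if q.2 = j then 1 else 0) :
    GX.rank = n + lX + lZ ∧
      ((4 * n : ℕ) : ℤ) - 2 * ((n + lX + lZ : ℕ) : ℤ)
        = 2 * ((n : ℤ) - (lX : ℤ) - (lZ : ℤ)) := by
  obtain ⟨hrank, hlogical⟩ := doubled_code_rank_general HX HZ GX hGX₁ hGX₂ hGX₃
  rw [Fintype.card_fin, hrX, hrZ] at hrank hlogical
  exact ⟨hrank, hrank ▸ hlogical⟩
end
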